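/- Suppose Ideal(c_eq)+QM(c_in) is archimedean and Assumption A holds. If the LICQC, SCC and SOSC hold at every global minimizer of the problem (Q): minimize f_{θ*}(x) := f(x) − Σ_i θ*_i a_i(x) subject to x ∈ K, then the Moment-SOS hierarchy has finite convergence: there exists k0 ∈ ℕ such that ϑ_k = φ_k = ϑ* = φ* for all k ≥ k0. -/

import Mathlib

open MvPolynomial MeasureTheory

noncomputable section

/-- The space of real polynomials in `n` variables. -/
abbrev RPoly (n : ℕ) : Type := MvPolynomial (Fin n) ℝ

/-- The degree `|α|` of a monomial power `α`. -/
def mdeg {n : ℕ} (α : Fin n →₀ ℕ) : ℕ := ∑ i, α i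

/-- `p` is a sum of squares of polynomials. -/
def IsSOS {n : ℕ} (p : RPoly n) : Prop :=
  ∃ L : List (RPoly n), p = (L.map (fun q => q ^ 2)).sum

/-- The truncation `QM(g)_k` of the quadratic module generated by `(g j)_{j ∈ S}`. -/
def QModDeg {n : ℕ} {κ : Type} (S : Finset κ) (g : κ → RPoly n) (k : ℕ) :
    Set (RPoly n) :=
  {p | ∃ σ0 : RPoly n, ∃ σ : κ → RPoly n,
      IsSOS σ0 ∧ σ0.totalDegree ≤ k ∧
      (∀ j ∈ S, IsSOS (σ j) ∧ (σ j).totalDegree + (g j).totalDegree ≤ k) ∧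
      p = σ0 + ∑ j ∈ S, g j * σ j}

/-- The truncation `Ideal(h)_k` of the ideal generated by `(h j)_{j ∈ S}`. -/
def IdealDeg {n : ℕ} {ι : Type} (S : Finset ι) (h : ι → RPoly n) (k : ℕ) :
    Set (RPoly n) :=
  {p | ∃ q : ι → RPoly n,
      (∀ j ∈ S, (q j).totalDegree + (h j).totalDegree ≤ k) ∧
      p = ∑ j ∈ S, h j * q j}

/-- The quadratic module `QM(g)` generated by `(g j)_{j ∈ S}`. -/
def QModFull {n : ℕ} {κ : Type} (S : Finset κ) (g : κ → RPoly n) : Set (RPoly n) :=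
  {p | ∃ σ0 : RPoly n, ∃ σ : κ → RPoly n,
      IsSOS σ0 ∧ (∀ j ∈ S, IsSOS (σ j)) ∧ p = σ0 + ∑ j ∈ S, g j * σ j}

/-- The ideal `Ideal(h)` generated by `(h j)_{j ∈ S}`. -/
def IdealFull {n : ℕ} {ι : Type} (S : Finset ι) (h : ι → RPoly n) : Set (RPoly n) :=
  (Ideal.span (h '' (S : Set ι)) : Ideal (RPoly n))

/-- `Ideal(c_eq) + QM(c_in)` is archimedean. -/
def ArchimedeanQM {n : ℕ} (E I : Finset ℕ) (c : ℕ → RPoly n) : Prop :=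
  ∃ R : ℝ, 0 < R ∧ ∃ p1 ∈ IdealFull E c, ∃ p2 ∈ QModFull I c,
    (C R : RPoly n) - ∑ i, (X i : RPoly n) ^ 2 = p1 + p2

/-- The basic closed semialgebraic set `K`. -/
def Kset {n : ℕ} (E I : Finset ℕ) (c : ℕ → RPoly n) : Set (Fin n → ℝ) :=
  {x | (∀ j ∈ E, eval x (c j) = 0) ∧ (∀ j ∈ I, 0 ≤ eval x (c j))}

/-- The bilinear pairing `⟨p, y⟩ = ∑_α p_α y_α`. -/
def pairing {n : ℕ} (p : RPoly n) (y : (Fin n →₀ ℕ) → ℝ) : ℝ :=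
  ∑ α ∈ p.support, p.coeff α * y α

/-- Membership in the moment cone `ℛ_d(K)`: the entries `y_α`, `|α| ≤ d`, are the
moments of a finite Borel measure supported in the closed set `K`. -/
def InMomentCone {n : ℕ} (d : ℕ) (K : Set (Fin n → ℝ)) (y : (Fin n →₀ ℕ) → ℝ) : Prop :=
  ∃ μ : Measure (Fin n → ℝ), IsFiniteMeasure μ ∧ μ Kᶜ = 0 ∧
    ∀ α : Fin n →₀ ℕ, mdeg α ≤ d →
      Integrable (fun x => ∏ i, x i ^ α i) μ ∧
      y α = ∫ x, (∏ i, x i ^ α i) ∂μ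

/-- The cone `P_d(K)` of polynomials of degree at most `d` that are nonnegative on `K`. -/
def PdCone {n : ℕ} (d : ℕ) (K : Set (Fin n → ℝ)) : Set (RPoly n) :=
  {p | p.totalDegree ≤ d ∧ ∀ x ∈ K, 0 ≤ eval x p}

/-- The interior of `P_d(K)` in the coefficient topology of `ℝ[x]_d`. -/
def PdInterior {n : ℕ} (d : ℕ) (K : Set (Fin n → ℝ)) : Set (RPoly n) :=
  {p | p.totalDegree ≤ d ∧ ∃ ε : ℝ, 0 < ε ∧ ∀ q : RPoly n, q.totalDegree ≤ d →
      (∀ α : Fin n →₀ ℕ, |q.coeff α - p.coeff α| ≤ ε) → ∀ x ∈ K, 0 ≤ eval x q}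

instance degLEFintype (n t : ℕ) : Fintype {α : Fin n →₀ ℕ // mdeg α ≤ t} := by
  apply Fintype.ofInjective
    (fun a : {α : Fin n →₀ ℕ // mdeg α ≤ t} =>
      (fun i => (⟨a.1 i, by
        have h1 : a.1 i ≤ mdeg a.1 :=
          Finset.single_le_sum (fun j _ => Nat.zero_le _) (Finset.mem_univ i)
        exact Nat.lt_succ_of_le (le_trans h1 a.2)⟩ : Fin (t + 1))) :
        {α : Fin n →₀ ℕ // mdeg α ≤ t} → (Fin n → Fin (t + 1)))
  intro a b hab
  apply Subtype.ext
  ext i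
  exact congrArg Fin.val (congrFun hab i)

/-- The moment matrix `M_t[w]`, indexed by monomial powers of degree at most `t`. -/
def momentMatrix {n : ℕ} (t : ℕ) (w : (Fin n →₀ ℕ) → ℝ) :
    Matrix {α : Fin n →₀ ℕ // mdeg α ≤ t} {α : Fin n →₀ ℕ // mdeg α ≤ t} ℝ :=
  fun α β => w (α.1 + β.1)

/-- `w` admits a flat truncation: for some `d0 ≤ t ≤ k`,
`rank M_{t-dK}[w] = rank M_t[w]`. -/
def HasFlatTruncation {n : ℕ} (d0 dK k : ℕ) (w : (Fin n →₀ ℕ) → ℝ) : Prop :=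
  ∃ t : ℕ, d0 ≤ t ∧ t ≤ k ∧
    (momentMatrix (t - dK) w).rank = (momentMatrix t w).rank

/-- The gradient of a polynomial at a point. -/
def gradP {n : ℕ} (p : RPoly n) (u : Fin n → ℝ) : Fin n → ℝ :=
  fun i => eval u (pderiv i p)

/-- The Hessian of a polynomial at a point. -/
def hessP {n : ℕ} (p : RPoly n) (u : Fin n → ℝ) : Fin n → Fin n → ℝ :=
  fun i j => eval u (pderiv i (pderiv j p))

/-- The classical optimality conditions (LICQC, KKT with SCC and SOSC) at the point `u`
for the problem: minimize `F` subject to `ge j = 0` (`j ∈ Es`), `gi j ≥ 0` (`j ∈ Is`). -/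
def OptCondsAt {n : ℕ} {ι κ : Type}
    (Es : Finset ι) (ge : ι → RPoly n) (Is : Finset κ) (gi : κ → RPoly n)
    (F : RPoly n) (u : Fin n → ℝ) : Prop :=
  -- LICQC: gradients of active constraints are linearly independent
  LinearIndependent ℝ
    (Sum.elim
      (fun j : {j : ι // j ∈ Es ∧ eval u (ge j) = 0} => gradP (ge j.1) u)
      (fun j : {j : κ // j ∈ Is ∧ eval u (gi j) = 0} => gradP (gi j.1) u)) ∧
  ∃ (lamE : ι → ℝ) (lamI : κ → ℝ),
    -- KKT stationarity
    (gradP F u =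
      (∑ j ∈ Es, lamE j • gradP (ge j) u) + ∑ j ∈ Is, lamI j • gradP (gi j) u) ∧
    (∀ j ∈ Is, 0 ≤ lamI j ∧ lamI j * eval u (gi j) = 0) ∧
    -- SCC
    (∀ j ∈ Is, 0 < lamI j + eval u (gi j)) ∧
    -- SOSC
    (∀ v : Fin n → ℝ, v ≠ 0 →
      (∀ j ∈ Es, (∑ i, v i * gradP (ge j) u i) = 0) →
      (∀ j ∈ Is, eval u (gi j) = 0 → (∑ i, v i * gradP (gi j) u i) = 0) →
      0 < ∑ i, ∑ i', v i *
        ((hessP F u i i' - ∑ j ∈ Es, lamE j * hessP (ge j) u i i')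
          - ∑ j ∈ Is, lamI j * hessP (gi j) u i i') * v i')

/-- The degree-`ℓ` homogenization `x_0^ℓ p(x/x_0)` of `p`; the new variable `x_0`
is the variable of index `0` in `Fin (n+1)`. -/
def homogAux {n : ℕ} (ℓ : ℕ) (p : RPoly n) : RPoly (n + 1) :=
  ∑ α ∈ p.support,
    monomial
      (Finsupp.single (0 : Fin (n + 1)) (ℓ - mdeg α) + Finsupp.mapDomain Fin.succ α)
      (p.coeff α)

/-- The homogenization `p̃` of `p`. -/
def homogenize {n : ℕ} (p : RPoly n) : RPoly (n + 1) := homogAux p.totalDegree p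

/-- The polynomial `‖x̃‖² - 1`. -/
def sphereP (n : ℕ) : RPoly (n + 1) := (∑ i, (X i : RPoly (n + 1)) ^ 2) - 1

/-- The homogenization `K̃` of the set `K`. -/
def Khom {n : ℕ} (E I : Finset ℕ) (c : ℕ → RPoly n) : Set (Fin (n + 1) → ℝ) :=
  {x | (∀ j ∈ E, eval x (homogenize (c j)) = 0) ∧
       (∀ j ∈ I, 0 ≤ eval x (homogenize (c j))) ∧
       (∑ i, (x i) ^ 2) = 1 ∧ 0 ≤ x 0}

/-- `K` is closed at infinity. -/
def ClosedAtInfinity {n : ℕ} (E I : Finset ℕ) (c : ℕ → RPoly n) : Prop :=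
  Khom E I c = closure (Khom E I c ∩ {x | 0 < x 0})

/-- The tuple `c̃_eq`: the homogenizations `c̃_j` together with `‖x̃‖² - 1`
(the latter indexed by `none`). -/
def gEqH {n : ℕ} (c : ℕ → RPoly n) : Option ℕ → RPoly (n + 1) :=
  fun o => o.elim (sphereP n) (fun j => homogenize (c j))

/-- The tuple `c̃_in`: the homogenizations `c̃_j` together with `x_0`
(the latter indexed by `none`). -/
def gInH {n : ℕ} (c : ℕ → RPoly n) : Option ℕ → RPoly (n + 1) :=
  fun o => o.elim (X 0) (fun j => homogenize (c j))

/-- The index set of a tuple extended by one extra entry (indexed by `none`). -/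
def OS (S : Finset ℕ) : Finset (Option ℕ) := insert none (S.image some)

/-- Feasibility of `θ` for the linear conic problem (P). -/
def PFeas {n m : ℕ} (m1 d : ℕ) (f : RPoly n) (a : Fin m → RPoly n)
    (K : Set (Fin n → ℝ)) (θ : Fin m → ℝ) : Prop :=
  (∀ i : Fin m, m1 ≤ (i : ℕ) → 0 ≤ θ i) ∧ (f - ∑ i, C (θ i) * a i) ∈ PdCone d K

/-- The optimal value `ϑ*` of the linear conic problem (P). -/
def PVal {n m : ℕ} (m1 d : ℕ) (f : RPoly n) (a : Fin m → RPoly n) (b : Fin m → ℝ)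
    (K : Set (Fin n → ℝ)) : ℝ :=
  sSup {v : ℝ | ∃ θ : Fin m → ℝ, PFeas m1 d f a K θ ∧ v = ∑ i, b i * θ i}

/-- Feasibility of `y` for the generalized moment problem (M). -/
def MFeas {n m : ℕ} (m1 d : ℕ) (a : Fin m → RPoly n) (b : Fin m → ℝ)
    (K : Set (Fin n → ℝ)) (y : (Fin n →₀ ℕ) → ℝ) : Prop :=
  InMomentCone d K y ∧
  (∀ i : Fin m, (i : ℕ) < m1 → pairing (a i) y = b i) ∧
  (∀ i : Fin m, m1 ≤ (i : ℕ) → b i ≤ pairing (a i) y)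

/-- The optimal value `φ*` of the generalized moment problem (M). -/
def MVal {n m : ℕ} (m1 d : ℕ) (f : RPoly n) (a : Fin m → RPoly n) (b : Fin m → ℝ)
    (K : Set (Fin n → ℝ)) : ℝ :=
  sInf {v : ℝ | ∃ y : (Fin n →₀ ℕ) → ℝ, MFeas m1 d a b K y ∧ v = pairing f y}

/-- The optimal value `ϑ_k` of the `k`th SOS relaxation of (P). -/
def SOSRelaxVal {n m : ℕ} {ι κ : Type} (m1 : ℕ) (f : RPoly n) (a : Fin m → RPoly n)
    (b : Fin m → ℝ) (Es : Finset ι) (ge : ι → RPoly n) (Is : Finset κ) (gi : κ → RPoly n)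
    (k : ℕ) : ℝ :=
  sSup {v : ℝ | ∃ θ : Fin m → ℝ, (∀ i : Fin m, m1 ≤ (i : ℕ) → 0 ≤ θ i) ∧
      (∃ p1 ∈ IdealDeg Es ge (2 * k), ∃ p2 ∈ QModDeg Is gi (2 * k),
        f - ∑ i, C (θ i) * a i = p1 + p2) ∧
      v = ∑ i, b i * θ i}

/-- The semidefinite constraints of the `k`th moment relaxation:
the localizing vectors of the equality constraints vanish, and the localizing
matrices of the inequality constraints and the moment matrix are positive
semidefinite (stated equivalently via the associated quadratic forms). -/
def MomRelaxPSD {n : ℕ} {ι κ : Type} (Es : Finset ι) (ge : ι → RPoly n)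
    (Is : Finset κ) (gi : κ → RPoly n) (k : ℕ) (w : (Fin n →₀ ℕ) → ℝ) : Prop :=
  (∀ j ∈ Es, ∀ p : RPoly n, p.totalDegree + (ge j).totalDegree ≤ 2 * k →
      pairing (ge j * p) w = 0) ∧
  (∀ j ∈ Is, ∀ p : RPoly n, p.totalDegree + ((gi j).totalDegree + 1) / 2 ≤ k →
      0 ≤ pairing (gi j * p ^ 2) w) ∧
  (∀ p : RPoly n, p.totalDegree ≤ k → 0 ≤ pairing (p ^ 2) w)

/-- Feasibility of `w` for the `k`th moment relaxation of (M). -/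
def GMomFeas {n m : ℕ} {ι κ : Type} (m1 : ℕ) (a : Fin m → RPoly n) (b : Fin m → ℝ)
    (Es : Finset ι) (ge : ι → RPoly n) (Is : Finset κ) (gi : κ → RPoly n) (k : ℕ)
    (w : (Fin n →₀ ℕ) → ℝ) : Prop :=
  (∀ i : Fin m, (i : ℕ) < m1 → pairing (a i) w = b i) ∧
  (∀ i : Fin m, m1 ≤ (i : ℕ) → b i ≤ pairing (a i) w) ∧
  MomRelaxPSD Es ge Is gi k w

/-- The optimal value `φ_k` of the `k`th moment relaxation of (M). -/
def GMomVal {n m : ℕ} {ι κ : Type} (m1 : ℕ) (f : RPoly n) (a : Fin m → RPoly n)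
    (b : Fin m → ℝ) (Es : Finset ι) (ge : ι → RPoly n) (Is : Finset κ) (gi : κ → RPoly n)
    (k : ℕ) : ℝ :=
  sInf {v : ℝ | ∃ w : (Fin n →₀ ℕ) → ℝ,
      GMomFeas m1 a b Es ge Is gi k w ∧ v = pairing f w}

/-- The optimal value `f_k^den` of the `k`th order relaxation with denominators. -/
def DenRelaxVal {n : ℕ} (E I : Finset ℕ) (c : ℕ → RPoly n) (f : RPoly n) (d k : ℕ) : ℝ :=
  sSup {γ : ℝ | ∃ p1 ∈ IdealDeg E c (2 * k + d), ∃ p2 ∈ QModDeg I c (2 * k + d),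
      (1 + ∑ i, (X i : RPoly n) ^ 2) ^ k * (f - C γ) = p1 + p2}


/-- The degree bound `d_K = max_j ⌈deg(c_j)/2⌉`. -/
def dKOrig {n : ℕ} (E I : Finset ℕ) (c : ℕ → RPoly n) : ℕ :=
  (E ∪ I).sup fun j => ((c j).totalDegree + 1) / 2

/-- The degree bound `d_0` for the GMP relaxations. -/
def d0GMP {n m : ℕ} (f : RPoly n) (a : Fin m → RPoly n) (E I : Finset ℕ)
    (c : ℕ → RPoly n) : ℕ :=
  max ((f.totalDegree + 1) / 2)
    (max (dKOrig E I c) (Finset.univ.sup fun i : Fin m => ((a i).totalDegree + 1) / 2))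

/-- The degree bound `d̃_K` for the homogenized constraining tuples. -/
def dKHom {n : ℕ} (E I : Finset ℕ) (c : ℕ → RPoly n) : ℕ :=
  max ((OS E).sup fun o => ((gEqH c o).totalDegree + 1) / 2)
      ((OS I).sup fun o => ((gInH c o).totalDegree + 1) / 2)

end

structure QMod {A : Type*} [CommRing A] [Algebra ℝ A] (M : Set A) : Prop where
  one : (1 : A) ∈ M
  add : ∀ {a b}, a ∈ M → b ∈ M → a + b ∈ M
  sqmul : ∀ (a) {b}, b ∈ M → a ^ 2 * b ∈ M

namespace QMod
variable {A : Type*} [CommRing A] [Algebra ℝ A] {M : Set A}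

theorem sq (h : QMod M) (a : A) : a ^ 2 ∈ M := by simpa using h.sqmul a h.one

theorem zero (h : QMod M) : (0 : A) ∈ M := by simpa using h.sqmul 0 h.one

theorem smul (h : QMod M) {r : ℝ} (hr : 0 ≤ r) {b : A} (hb : b ∈ M) : r • b ∈ M := by
  have := h.sqmul (algebraMap ℝ A (Real.sqrt r)) hb
  rwa [← map_pow, Real.sq_sqrt hr, ← Algebra.smul_def] at this

theorem sum (h : QMod M) {ι : Type*} (s : Finset ι) (g : ι → A) (hg : ∀ i ∈ s, g i ∈ M) :
    ∑ i ∈ s, g i ∈ M := by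
  classical
  induction s using Finset.induction_on with
  | empty => simpa using h.zero
  | insert i s hi ih =>
    rw [Finset.sum_insert hi]
    exact h.add (hg i (by simp)) (ih fun j hj => hg j (by simp [hj]))

theorem mono_unit (h : QMod M) {u b : A} (hu : u ∈ M) {N N' : ℝ} (hN : N ≤ N')
    (hb : N • u + b ∈ M) : N' • u + b ∈ M := by
  have := h.add hb (h.smul (sub_nonneg.2 hN) hu)
  convert this using 1
  module

end QMod

/-- elements dominated by `u` -/
def domBy {A : Type*} [CommRing A] [Algebra ℝ A] (M : Set A) (h : QMod M) (u : A) :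
    Submodule ℝ A where
  carrier := {b | ∃ N : ℝ, 0 ≤ N ∧ N • u + b ∈ M ∧ N • u - b ∈ M}
  zero_mem' := ⟨0, le_rfl, by simpa using h.zero, by simpa using h.zero⟩
  add_mem' := by
    rintro a b ⟨N, hN, h1, h2⟩ ⟨N', hN', h3, h4⟩
    refine ⟨N + N', by positivity, ?_, ?_⟩
    · convert h.add h1 h3 using 1; module
    · convert h.add h2 h4 using 1; module
  smul_mem' := by
    rintro r a ⟨N, hN, h1, h2⟩
    refine ⟨|r| * N, by positivity, ?_, ?_⟩
    · rcases le_total 0 r with hr | hr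
      · rw [abs_of_nonneg hr]; convert h.smul hr h1 using 1; module
      · rw [abs_of_nonpos hr]; convert h.smul (neg_nonneg.2 hr) h2 using 1; module
    · rcases le_total 0 r with hr | hr
      · rw [abs_of_nonneg hr]; convert h.smul hr h2 using 1; module
      · rw [abs_of_nonpos hr]; convert h.smul (neg_nonneg.2 hr) h1 using 1; module

/-- states, extended by zero outside `J` -/
def stateSet {A : Type*} [CommRing A] [Algebra ℝ A] (M : Set A) (J : Submodule ℝ A) (u : A) :
    Set (A → ℝ) :=
  {φ | (∀ a, a ∉ J → φ a = 0) ∧ (∀ a ∈ J, ∀ b ∈ J, φ (a + b) = φ a + φ b) ∧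
    (∀ r : ℝ, ∀ a ∈ J, φ (r • a) = r * φ a) ∧ (∀ a ∈ J, a ∈ M → 0 ≤ φ a) ∧ φ u = 1}

theorem logconvex_bound (m : ℕ → ℝ) (h0 : ∀ k, 0 ≤ m k)
    (h1 : ∀ k, m (k + 1) ^ 2 ≤ m k * m (k + 2)) (C r : ℝ) (hr : 0 < r)
    (hb : ∀ k, m k ≤ C * r ^ k) : m 1 ≤ r * m 0 := by
  by_contra hcon
  push Not at hcon
  rcases (h0 0).eq_or_lt with h | h
  · have := h1 0
    rw [← h] at this hcon
    simp at this hcon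
    rw [this] at hcon
    exact lt_irrefl _ hcon
  set ρ := m 1 / m 0 with hρ
  have hrρ : r < ρ := by rw [hρ, lt_div_iff₀ h]; exact hcon
  have hρ0 : 0 < ρ := hr.trans hrρ
  have key : ∀ k, 0 < m k ∧ ρ * m k ≤ m (k + 1) := by
    intro k
    induction k with
    | zero => exact ⟨h, by rw [hρ]; field_simp; simp⟩
    | succ k ih =>
      obtain ⟨a, b⟩ := ih
      have c : 0 < m (k + 1) := lt_of_lt_of_le (by positivity) b
      refine ⟨c, ?_⟩
      have := h1 k
      have e : ρ * m (k + 1) * m k ≤ m (k + 2) * m k := by nlinarith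
      exact le_of_mul_le_mul_right e a
  have key2 : ∀ k, ρ ^ k * m 0 ≤ m k := by
    intro k
    induction k with
    | zero => simp
    | succ k ih =>
      calc ρ ^ (k + 1) * m 0 = ρ * (ρ ^ k * m 0) := by ring
        _ ≤ ρ * m k := by gcongr
        _ ≤ _ := (key k).2
  have h3 : ∀ k, (ρ / r) ^ k ≤ C / m 0 := by
    intro k
    rw [div_pow, div_le_div_iff₀ (by positivity) h]
    exact (key2 k).trans (hb k)
  have ht := tendsto_pow_atTop_atTop_of_one_lt (show 1 < ρ / r by rwa [one_lt_div hr])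
  obtain ⟨k, hk⟩ := (ht.eventually_gt_atTop (C / m 0)).exists
  exact absurd (h3 k) (not_le.2 hk)

section
variable {A : Type*} [CommRing A] [Algebra ℝ A] {M : Set A}

theorem state_sub {J : Submodule ℝ A} {u : A} {φ : A → ℝ} (hφ : φ ∈ stateSet M J u)
    {a b : A} (ha : a ∈ J) (hb : b ∈ J) : φ (a - b) = φ a - φ b := by
  have := hφ.2.1 a ha ((-1 : ℝ) • b) (J.smul_mem _ hb)
  rw [hφ.2.2.1 _ _ hb] at this
  rw [show a - b = a + (-1 : ℝ) • b by module, this]; ring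

theorem state_zero {J : Submodule ℝ A} {u : A} {φ : A → ℝ} (hφ : φ ∈ stateSet M J u) :
    φ 0 = 0 := by
  simpa using hφ.2.2.1 0 0 J.zero_mem

theorem state_sum {J : Submodule ℝ A} {u : A} {φ : A → ℝ} (hφ : φ ∈ stateSet M J u)
    {ι : Type*} (s : Finset ι) (g : ι → A) (hg : ∀ i ∈ s, g i ∈ J) :
    φ (∑ i ∈ s, g i) = ∑ i ∈ s, φ (g i) := by
  classical
  induction s using Finset.induction_on with
  | empty => simpa using state_zero hφ
  | insert i s hi ih =>
    rw [Finset.sum_insert hi, Finset.sum_insert hi,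
      hφ.2.1 _ (hg i (by simp)) _ (J.sum_mem fun j hj => hg j (by simp [hj])),
      ih fun j hj => hg j (by simp [hj])]

/-- abs bound -/
theorem state_abs (h : QMod M) {J : Submodule ℝ A} {u : A} {φ : A → ℝ}
    (hφ : φ ∈ stateSet M J u) (hJ : ∀ a, ∀ b ∈ J, a * b ∈ J) (huJ : u ∈ J) (c : A) {b : A} (hb : b ∈ J)
    {N : ℝ} (h1 : N • u + b ∈ M) (h2 : N • u - b ∈ M) : |φ (c ^ 2 * b)| ≤ N * φ (c ^ 2 * u) := by
  have e1 := hφ.2.2.2.1 _ (hJ (c ^ 2) _ (J.add_mem (J.smul_mem N huJ) hb)) (h.sqmul c h1)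
  have e2 := hφ.2.2.2.1 _ (hJ (c ^ 2) _ (J.sub_mem (J.smul_mem N huJ) hb)) (h.sqmul c h2)
  have m1 := hJ (c ^ 2) _ huJ
  have m2 := hJ (c ^ 2) _ hb
  rw [mul_add, mul_smul_comm, hφ.2.1 _ (J.smul_mem _ m1) _ m2, hφ.2.2.1 _ _ m1] at e1
  rw [mul_sub, mul_smul_comm, state_sub hφ (J.smul_mem _ m1) m2, hφ.2.2.1 _ _ m1] at e2
  rw [abs_le]; constructor <;> linarith

theorem state_dom (h : QMod M) {J : Submodule ℝ A} {u : A} {φ : A → ℝ}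
    (hφ : φ ∈ stateSet M J u) (hJ : ∀ a, ∀ b ∈ J, a * b ∈ J) (huJ : u ∈ J)
    (hord : ∀ b ∈ J, ∃ N : ℝ, 0 ≤ N ∧ N • u + b ∈ M ∧ N • u - b ∈ M)
    (c : A) {r : ℝ} (hr : 0 < r) (hc : r • u - c ^ 2 * u ∈ M) {b : A} (hb : b ∈ J) (hbM : b ∈ M) :
    φ (c ^ 2 * b) ≤ r * φ b := by
  have hsub := fun {a b} => state_sub hφ (a := a) (b := b)
  have hu : ∀ k : ℕ, φ (c ^ (2 * k) * u) ≤ r ^ k := by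
    intro k
    induction k with
    | zero => simp [hφ.2.2.2.2]
    | succ k ih =>
      have m1 := hJ (c ^ (2 * k)) _ huJ
      have m2 := hJ (c ^ (2 * (k + 1))) _ huJ
      have e := h.sqmul (c ^ k) hc
      have e' : (c ^ k) ^ 2 * (r • u - c ^ 2 * u) = r • (c ^ (2 * k) * u) - c ^ (2 * (k + 1)) * u := by
        rw [mul_sub, mul_smul_comm]; ring_nf
      rw [e'] at e
      have := hφ.2.2.2.1 _ (J.sub_mem (J.smul_mem _ m1) m2) e
      rw [hsub (J.smul_mem _ m1) m2, hφ.2.2.1 _ _ m1] at this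
      rw [pow_succ]
      nlinarith
  obtain ⟨C, hC0, hC1, hC2⟩ := hord b hb
  have := logconvex_bound (fun k => φ (c ^ (2 * k) * b)) ?_ ?_ C r hr ?_
  · simpa using this
  · intro k
    refine hφ.2.2.2.1 _ (hJ _ _ hb) ?_
    rw [mul_comm 2 k, pow_mul]; exact h.sqmul _ hbM
  · intro k
    have q : ∀ t : ℝ, 0 ≤ φ (c ^ (2 * (k + 2)) * b) * (t * t) + (2 * φ (c ^ (2 * (k + 1)) * b)) * t
        + φ (c ^ (2 * k) * b) := by
      intro t
      have e := h.sqmul (c ^ k + t • c ^ (k + 2)) hbM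
      have e := h.sqmul (c ^ k * (1 + t • c ^ 2)) hbM
      have e' : (c ^ k * (1 + t • c ^ 2)) ^ 2 * b = (t * t) • (c ^ (2 * (k + 2)) * b)
        + ((2 * t) • (c ^ (2 * (k + 1)) * b) + c ^ (2 * k) * b) := by algebra
      rw [e'] at e
      have n1 := hJ (c ^ (2 * (k + 2))) _ hb
      have n2 := hJ (c ^ (2 * (k + 1))) _ hb
      have n3 := hJ (c ^ (2 * k)) _ hb
      have := hφ.2.2.2.1 _ (J.add_mem (J.smul_mem _ n1) (J.add_mem (J.smul_mem _ n2) n3)) e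
      rw [hφ.2.1 _ (J.smul_mem _ n1) _ (J.add_mem (J.smul_mem _ n2) n3),
        hφ.2.1 _ (J.smul_mem _ n2) _ n3, hφ.2.2.1 _ _ n1, hφ.2.2.1 _ _ n2] at this
      linarith
    have := discrim_le_zero q
    rw [discrim] at this
    nlinarith
  · intro k
    have := (abs_le.1 (state_abs h hφ hJ huJ (c ^ k) hb hC1 hC2)).2
    rw [← pow_mul, mul_comm k 2] at this
    exact this.trans (mul_le_mul_of_nonneg_left (hu k) hC0)

theorem pure_mul_sq (h : QMod M) {J : Submodule ℝ A} {u : A} {φ : A → ℝ}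
    (hφe : φ ∈ (stateSet M J u).extremePoints ℝ) (hJ : ∀ a, ∀ b ∈ J, a * b ∈ J)
    (huJ : u ∈ J) (huM : u ∈ M)
    (hord : ∀ b ∈ J, ∃ N : ℝ, 0 ≤ N ∧ N • u + b ∈ M ∧ N • u - b ∈ M)
    (c : A) {b : A} (hb : b ∈ J) : φ (c ^ 2 * b) = φ (c ^ 2 * u) * φ b := by
  classical
  have hφ := hφe.1
  obtain ⟨N, hN0, hN1, hN2⟩ := hord _ (hJ (c ^ 2) _ huJ)
  set r := N + 1 with hr
  have hr0 : 0 < r := by positivity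
  have hc : ∀ b ∈ J, b ∈ M → φ (c ^ 2 * b) ≤ r * φ b := fun b hb hbM =>
    state_dom h hφ hJ huJ hord c hr0 (by
      have := h.add hN2 huM
      convert this using 1; rw [hr]; module) hb hbM
  set t := φ (c ^ 2 * u) with ht
  have ht0 : 0 ≤ t := hφ.2.2.2.1 _ (hJ _ _ huJ) (h.sqmul c huM)
  have htr : t ≤ N := by
    have := hφ.2.2.2.1 _ (J.sub_mem (J.smul_mem N huJ) (hJ (c ^ 2) _ huJ)) hN2
    rw [state_sub hφ (J.smul_mem N huJ) (hJ (c ^ 2) _ huJ), hφ.2.2.1 _ _ huJ, hφ.2.2.2.2] at this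
    linarith
  rcases ht0.eq_or_lt with h0 | h0
  · obtain ⟨N', -, h1, h2⟩ := hord b hb
    have := state_abs h hφ hJ huJ c hb h1 h2
    rw [← ht, ← h0, mul_zero] at this
    rw [← h0, zero_mul]
    exact abs_nonpos_iff.1 this
  have hrt : 0 < r - t := by rw [hr]; linarith
  let ψ1 : A → ℝ := fun x => if x ∈ J then t⁻¹ * φ (c ^ 2 * x) else 0
  let ψ2 : A → ℝ := fun x => if x ∈ J then (r - t)⁻¹ * (r * φ x - φ (c ^ 2 * x)) else 0
  have h1 : ψ1 ∈ stateSet M J u := by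
    refine ⟨fun a ha => by simp [ψ1, ha], fun a ha b hb => ?_, fun s a ha => ?_, fun a ha haM => ?_, ?_⟩
    · simp only [ψ1, ha, hb, J.add_mem ha hb, if_true]
      rw [mul_add, hφ.2.1 _ (hJ _ _ ha) _ (hJ _ _ hb)]; ring
    · simp only [ψ1, ha, J.smul_mem s ha, if_true]
      rw [mul_smul_comm, hφ.2.2.1 _ _ (hJ _ _ ha)]; ring
    · simp only [ψ1, ha, if_true]
      exact mul_nonneg (by positivity) (hφ.2.2.2.1 _ (hJ _ _ ha) (h.sqmul c haM))
    · simp only [ψ1, huJ, if_true]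
      rw [← ht]; field_simp
  have h2 : ψ2 ∈ stateSet M J u := by
    refine ⟨fun a ha => by simp [ψ2, ha], fun a ha b hb => ?_, fun s a ha => ?_, fun a ha haM => ?_, ?_⟩
    · simp only [ψ2, ha, hb, J.add_mem ha hb, if_true]
      rw [mul_add, hφ.2.1 _ (hJ _ _ ha) _ (hJ _ _ hb), hφ.2.1 _ ha _ hb]; ring
    · simp only [ψ2, ha, J.smul_mem s ha, if_true]
      rw [mul_smul_comm, hφ.2.2.1 _ _ (hJ _ _ ha), hφ.2.2.1 _ _ ha]; ring
    · simp only [ψ2, ha, if_true]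
      exact mul_nonneg (by positivity) (sub_nonneg.2 (hc a ha haM))
    · simp only [ψ2, huJ, if_true]
      rw [← ht, hφ.2.2.2.2]; field_simp
  have hseg : φ ∈ openSegment ℝ ψ1 ψ2 := by
    refine ⟨t / r, (r - t) / r, by positivity, by positivity, by field_simp; ring, ?_⟩
    funext x
    by_cases hx : x ∈ J
    · simp only [Pi.add_apply, Pi.smul_apply, smul_eq_mul, ψ1, ψ2, hx, if_true]
      field_simp
      ring
    · simp [ψ1, ψ2, hx, hφ.1 x hx]
  have := congrFun (hφe.2 h1 h2 hseg) b
  simp only [ψ1, hb, if_true] at this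
  rw [← this]; field_simp

theorem pure_mul (h : QMod M) {J : Submodule ℝ A} {u : A} {φ : A → ℝ}
    (hφe : φ ∈ (stateSet M J u).extremePoints ℝ) (hJ : ∀ a, ∀ b ∈ J, a * b ∈ J)
    (huJ : u ∈ J) (huM : u ∈ M)
    (hord : ∀ b ∈ J, ∃ N : ℝ, 0 ≤ N ∧ N • u + b ∈ M ∧ N • u - b ∈ M)
    (a : A) {b : A} (hb : b ∈ J) : φ (a * b) = φ (a * u) * φ b := by
  have hφ := hφe.1
  have key : ∀ b ∈ J, φ (a * b) = (1/4 : ℝ) * φ ((a + 1) ^ 2 * b) - (1/4 : ℝ) * φ ((a - 1) ^ 2 * b) := by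
    intro b hb
    rw [← hφ.2.2.1 _ _ (hJ _ _ hb), ← hφ.2.2.1 _ _ (hJ _ _ hb),
      ← state_sub hφ (J.smul_mem _ (hJ _ _ hb)) (J.smul_mem _ (hJ _ _ hb))]
    congr 1
    algebra
  rw [key b hb, key u huJ, pure_mul_sq h hφe hJ huJ huM hord _ hb,
    pure_mul_sq h hφe hJ huJ huM hord _ hb]
  ring

theorem exists_pure (h : QMod M) {J : Submodule ℝ A} {u : A} (huJ : u ∈ J) (huM : u ∈ M)
    (hord : ∀ b ∈ J, ∃ N : ℝ, 0 ≤ N ∧ N • u + b ∈ M ∧ N • u - b ∈ M)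
    {p : A} (hp : p ∈ J) (hpM : p ∉ M) :
    ∃ φ ∈ (stateSet M J u).extremePoints ℝ, φ p ≤ 0 := by
  classical
  have hnu : -u ∉ M := by
    intro hn
    obtain ⟨N, hN0, h1, -⟩ := hord p hp
    apply hpM
    convert h.add h1 (h.smul hN0 hn) using 1
    module
  have hu0 : (⟨u, huJ⟩ : J) ≠ 0 := by
    intro h0
    have : u = 0 := congrArg Subtype.val h0
    apply hnu; rw [this, neg_zero]; exact h.zero
  let s : PointedCone ℝ J := 
    { carrier := {x | ∃ t : ℝ, 0 ≤ t ∧ (x : A) + t • p ∈ M}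
      zero_mem' := ⟨0, le_rfl, by simpa using h.zero⟩
      add_mem' := by
        rintro x y ⟨t, ht, hx⟩ ⟨t', ht', hy⟩
        refine ⟨t + t', by positivity, ?_⟩
        convert h.add hx hy using 1
        rw [Submodule.coe_add]; module
      smul_mem' := by
        rintro ⟨c, hc⟩ x ⟨t, ht, hx⟩
        refine ⟨c * t, by positivity, ?_⟩
        convert h.smul hc hx using 1
        change c • (x : A) + _ = _
        module }
  let F : J →ₗ.[ℝ] ℝ := LinearPMap.mkSpanSingleton (⟨u, huJ⟩ : J) (1 : ℝ) hu0
  have hnn : ∀ x : F.domain, (x : J) ∈ s → 0 ≤ F x := by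
    rintro ⟨x, hx⟩ hxs
    obtain ⟨r, rfl⟩ := Submodule.mem_span_singleton.1 hx
    have hF : F ⟨r • ⟨u, huJ⟩, hx⟩ = r • (1 : ℝ) := LinearPMap.mkSpanSingleton'_apply _ _ _ _ _
    rw [hF]
    obtain ⟨t, ht, hxt⟩ := hxs
    change r • u + t • p ∈ M at hxt
    by_contra hr
    simp at hr
    rcases ht.eq_or_lt with h0 | h0
    · rw [← h0, zero_smul, add_zero] at hxt
      apply hnu
      convert h.smul (show 0 ≤ (-r)⁻¹ by rw [inv_nonneg]; linarith) hxt using 1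
      rw [smul_smul, show (-r)⁻¹ * r = -1 by have := hr.ne; field_simp]; module
    · apply hpM
      have := h.add hxt (h.smul (show 0 ≤ -r by linarith) huM)
      have := h.smul (show 0 ≤ t⁻¹ by positivity) this
      convert this using 1
      rw [show r • u + t • p + -r • u = t • p by module, smul_smul, inv_mul_cancel₀ h0.ne', one_smul]
  have hdn : ∀ y, ∃ x : F.domain, (x : J) + y ∈ s := by
    intro y
    obtain ⟨N, hN0, h1, -⟩ := hord y y.2
    refine ⟨⟨N • ⟨u, huJ⟩, Submodule.smul_mem _ _ (Submodule.mem_span_singleton_self _)⟩, 0, le_rfl, ?_⟩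
    simpa using h1
  obtain ⟨g, hg1, hg2⟩ := riesz_extension s F hnn hdn
  let φ0 : A → ℝ := fun x => if hx : x ∈ J then g ⟨x, hx⟩ else 0
  have hφ0 : φ0 ∈ stateSet M J u := by
    refine ⟨fun a ha => by simp [φ0, ha], fun a ha b hb => ?_, fun s a ha => ?_, fun a ha haM => ?_, ?_⟩
    · simp only [φ0, ha, hb, J.add_mem ha hb, dif_pos]
      rw [← map_add]; rfl
    · simp only [φ0, ha, J.smul_mem s ha, dif_pos]
      rw [← smul_eq_mul, ← map_smul]; rfl
    · simp only [φ0, ha, dif_pos]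
      exact hg2 _ ⟨0, le_rfl, by simpa using haM⟩
    · simp only [φ0, huJ, dif_pos]
      rw [hg1 ⟨⟨u, huJ⟩, Submodule.mem_span_singleton_self _⟩]
      exact LinearPMap.mkSpanSingleton'_apply_self _ _ _ _
  have hφ0p : φ0 p ≤ 0 := by
    have : 0 ≤ g (-⟨p, hp⟩) := hg2 _ ⟨1, zero_le_one, by simpa using h.zero⟩
    rw [map_neg] at this
    simp only [φ0, hp, dif_pos]; linarith
  have hcomp : IsCompact (stateSet M J u) := by
    choose! B hB using hord
    have hcl : IsClosed (stateSet M J u) := by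
      have : stateSet M J u = (⋂ a, ⋂ (_ : a ∉ J), {φ : A → ℝ | φ a = 0}) ∩
        ((⋂ a, ⋂ (_ : a ∈ J), ⋂ b, ⋂ (_ : b ∈ J), {φ : A → ℝ | φ (a + b) = φ a + φ b}) ∩
        ((⋂ r : ℝ, ⋂ a, ⋂ (_ : a ∈ J), {φ : A → ℝ | φ (r • a) = r * φ a}) ∩
        ((⋂ a, ⋂ (_ : a ∈ J), ⋂ (_ : a ∈ M), {φ : A → ℝ | 0 ≤ φ a}) ∩ {φ : A → ℝ | φ u = 1}))) := by
        ext φ; simp [stateSet]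
      rw [this]
      refine IsClosed.inter ?_ (IsClosed.inter ?_ (IsClosed.inter ?_ (IsClosed.inter ?_ ?_)))
      · exact isClosed_iInter fun a => isClosed_iInter fun _ => isClosed_eq (by fun_prop) (by fun_prop)
      · exact isClosed_iInter fun a => isClosed_iInter fun _ => isClosed_iInter fun b =>
          isClosed_iInter fun _ => isClosed_eq (by fun_prop) (by fun_prop)
      · exact isClosed_iInter fun a => isClosed_iInter fun b =>
          isClosed_iInter fun _ => isClosed_eq (by fun_prop) (by fun_prop)
      · exact isClosed_iInter fun a => isClosed_iInter fun b =>
          isClosed_iInter fun _ => isClosed_le (by fun_prop) (by fun_prop)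
      · exact isClosed_eq (by fun_prop) (by fun_prop)
    refine IsCompact.of_isClosed_subset (isCompact_univ_pi (s := fun a : A => Set.Icc (-(|B a|)) (|B a|))
      fun a => isCompact_Icc) hcl ?_
    intro φ hφ a _
    by_cases ha : a ∈ J
    · obtain ⟨hB0, hB1, hB2⟩ := hB a ha
      have e1 := hφ.2.2.2.1 _ (J.add_mem (J.smul_mem _ huJ) ha) hB1
      have e2 := hφ.2.2.2.1 _ (J.sub_mem (J.smul_mem _ huJ) ha) hB2
      rw [hφ.2.1 _ (J.smul_mem _ huJ) _ ha, hφ.2.2.1 _ _ huJ, hφ.2.2.2.2] at e1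
      rw [state_sub hφ (J.smul_mem _ huJ) ha, hφ.2.2.1 _ _ huJ, hφ.2.2.2.2] at e2
      change φ a ∈ Set.Icc _ _
      rw [abs_of_nonneg hB0]
      constructor <;> linarith
    · rw [hφ.1 a ha]; simp
  let l : (A → ℝ) →L[ℝ] ℝ := -ContinuousLinearMap.proj (R := ℝ) (φ := fun _ : A => ℝ) p
  have hexp : IsExposed ℝ (stateSet M J u) {y ∈ stateSet M J u | ∀ z ∈ stateSet M J u, l z ≤ l y} :=
    fun _ => ⟨l, rfl⟩
  obtain ⟨z, hzA, hz⟩ := hcomp.exists_isMaxOn ⟨φ0, hφ0⟩ l.continuous.continuousOn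
  obtain ⟨y, hy⟩ := (hexp.isCompact hcomp).extremePoints_nonempty ⟨z, hzA, hz⟩
  refine ⟨y, hexp.isExtreme.extremePoints_subset_extremePoints hy, ?_⟩
  have := hy.1.2 φ0 hφ0
  simp [l] at this
  linarith
end

theorem IsSOS.zero {n : ℕ} : IsSOS (0 : RPoly n) := ⟨[], by simp⟩

theorem IsSOS.add {n : ℕ} {p q : RPoly n} (hp : IsSOS p) (hq : IsSOS q) : IsSOS (p + q) := by
  obtain ⟨L, rfl⟩ := hp
  obtain ⟨L', rfl⟩ := hq
  exact ⟨L ++ L', by simp⟩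

theorem IsSOS.sqmul {n : ℕ} {p : RPoly n} (a : RPoly n) (hp : IsSOS p) : IsSOS (a ^ 2 * p) := by
  obtain ⟨L, rfl⟩ := hp
  refine ⟨L.map (fun q => a * q), ?_⟩
  induction L with
  | nil => simp
  | cons x L ih => 
    simp only [List.map_cons, List.sum_cons, mul_add] at ih ⊢
    rw [ih]; ring

theorem IsSOS.sq {n : ℕ} (a : RPoly n) : IsSOS (a ^ 2) := ⟨[a], by simp⟩

theorem IsSOS.eval_nonneg {n : ℕ} {p : RPoly n} (hp : IsSOS p) (x : Fin n → ℝ) : 0 ≤ eval x p := by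
  obtain ⟨L, rfl⟩ := hp
  induction L with
  | nil => simp
  | cons y L ih => 
    simp only [List.map_cons, List.sum_cons, map_add, map_pow]
    positivity

def bigM {n : ℕ} (E I : Finset ℕ) (c : ℕ → RPoly n) : Set (RPoly n) :=
  {q | ∃ p1 ∈ IdealFull E c, ∃ p2 ∈ QModFull I c, q = p1 + p2}

theorem bigM_qmod {n : ℕ} (E I : Finset ℕ) (c : ℕ → RPoly n) : QMod (bigM E I c) where
  one := ⟨0, Ideal.zero_mem _, 1, ⟨1, 0, by simpa using IsSOS.sq 1, fun _ _ => IsSOS.zero, by simp⟩, by simp⟩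
  add := by
    rintro _ _ ⟨p1, h1, p2, ⟨s0, s, hs0, hs, rfl⟩, rfl⟩ ⟨q1, k1, q2, ⟨t0, t, ht0, ht, rfl⟩, rfl⟩
    refine ⟨p1 + q1, Ideal.add_mem _ h1 k1, _, ⟨s0 + t0, s + t, hs0.add ht0,
      fun j hj => (hs j hj).add (ht j hj), rfl⟩, ?_⟩
    simp only [Pi.add_apply, mul_add, Finset.sum_add_distrib]; ring
  sqmul := by
    rintro a _ ⟨p1, h1, p2, ⟨s0, s, hs0, hs, rfl⟩, rfl⟩
    refine ⟨a ^ 2 * p1, Ideal.mul_mem_left _ _ h1, _, ⟨a ^ 2 * s0, fun j => a ^ 2 * s j, hs0.sqmul a,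
      fun j hj => (hs j hj).sqmul a, rfl⟩, ?_⟩
    rw [mul_add, mul_add, Finset.mul_sum]
    congr 2
    exact Finset.sum_congr rfl fun j _ => by ring

theorem bigM_in {n : ℕ} {E I : Finset ℕ} {c : ℕ → RPoly n} {j : ℕ} (hj : j ∈ I) : c j ∈ bigM E I c := by
  classical
  refine ⟨0, Ideal.zero_mem _, c j, ⟨0, fun i => if i = j then 1 else 0, IsSOS.zero, ?_, ?_⟩, by simp⟩
  · intro i _
    dsimp only
    split_ifs
    · simpa using IsSOS.sq (1 : RPoly n)
    · exact IsSOS.zero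
  · simp [hj]

theorem bigM_eq {n : ℕ} {E I : Finset ℕ} {c : ℕ → RPoly n} {j : ℕ} (hj : j ∈ E) (q : RPoly n) :
    q * c j ∈ bigM E I c :=
  ⟨q * c j, Ideal.mul_mem_left _ _ (Ideal.subset_span ⟨j, hj, rfl⟩), 0,
    ⟨0, 0, IsSOS.zero, fun _ _ => IsSOS.zero, by simp⟩, by simp⟩

theorem bounded_sq {A : Type*} [CommRing A] [Algebra ℝ A] {M : Set A} (h : QMod M) {b : A}
    (hb : b ∈ domBy M h 1) : b ^ 2 ∈ domBy M h 1 := by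
  obtain ⟨N, hN, h1, h2⟩ := hb
  have h1' : (N + 1) • (1 : A) + b ∈ M := h.mono_unit h.one (by linarith) h1
  have h2' : (N + 1) • (1 : A) - b ∈ M := by
    rw [sub_eq_add_neg] at h2 ⊢
    exact h.mono_unit h.one (by linarith) h2
  refine ⟨(N + 1) ^ 2, by positivity, h.add (h.smul (by positivity) h.one) (h.sq b), ?_⟩
  have e := h.smul (show 0 ≤ (2 * (N + 1))⁻¹ by positivity)
    (h.add (h.sqmul ((N + 1) • (1 : A) + b) h2') (h.sqmul ((N + 1) • (1 : A) - b) h1'))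
  convert e using 1
  have hK : N + 1 ≠ 0 := by positivity
  generalize N + 1 = K at *
  have : (K • (1 : A) + b) ^ 2 * (K • (1 : A) - b) + (K • (1 : A) - b) ^ 2 * (K • (1 : A) + b)
    = (2 * K) • (K ^ 2 • (1 : A) - b ^ 2) := by algebra
  rw [this, smul_smul, inv_mul_cancel₀ (by positivity), one_smul]

theorem arch_all {n : ℕ} {M : Set (RPoly n)} (h : QMod M) {R : ℝ} 
    (hR : (C R : RPoly n) - ∑ i, (X i : RPoly n) ^ 2 ∈ M) (q : RPoly n) : q ∈ domBy M h 1 := by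
  have hmul : ∀ a b : RPoly n, a ∈ domBy M h 1 → b ∈ domBy M h 1 → a * b ∈ domBy M h 1 := by
    intro a b ha hb
    have e : a * b = (1/4 : ℝ) • (a + b) ^ 2 - (1/4 : ℝ) • (a - b) ^ 2 := by algebra
    rw [e]
    exact Submodule.sub_mem _ (Submodule.smul_mem _ _ (bounded_sq h (Submodule.add_mem _ ha hb)))
      (Submodule.smul_mem _ _ (bounded_sq h (Submodule.sub_mem _ ha hb)))
  have hC : ∀ a : ℝ, (C a : RPoly n) ∈ domBy M h 1 := by
    intro a
    have : (C a : RPoly n) = a • 1 := by rw [smul_eq_C_mul, mul_one]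
    rw [this]
    refine Submodule.smul_mem _ _ ⟨1, zero_le_one, ?_, ?_⟩
    · rw [one_smul]; exact h.add h.one h.one
    · rw [one_smul, sub_self]; exact h.zero
  have hX : ∀ i, (X i : RPoly n) ∈ domBy M h 1 := by
    classical
    intro i
    have h1 : (C R : RPoly n) - X i ^ 2 ∈ M := by
      have := h.add hR (h.sum (Finset.univ.erase i) (fun j => (X j : RPoly n) ^ 2) (fun j _ => h.sq _))
      rw [← Finset.add_sum_erase _ _ (Finset.mem_univ i)] at this
      convert this using 1; ring
    have h2 : (2 : ℝ) • (X i : RPoly n) ∈ domBy M h 1 := by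
      refine ⟨|R| + 1, by positivity, ?_, ?_⟩
      · have := h.add (h.add h1 (h.sq (X i + 1))) (h.smul (sub_nonneg.2 (le_abs_self R)) h.one)
        convert this using 1
        simp only [smul_eq_C_mul, map_add, map_sub, map_ofNat, map_one]; ring
      · have := h.add (h.add h1 (h.sq (X i - 1))) (h.smul (sub_nonneg.2 (le_abs_self R)) h.one)
        convert this using 1
        simp only [smul_eq_C_mul, map_add, map_sub, map_ofNat, map_one]; ring
    have := Submodule.smul_mem _ (1/2 : ℝ) h2
    rwa [smul_smul, show (1/2 : ℝ) * 2 = 1 by norm_num, one_smul] at this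
  induction q using MvPolynomial.induction_on with
  | C a => exact hC a
  | add p q hp hq => exact Submodule.add_mem _ hp hq
  | mul_X p i hp => exact hmul _ _ hp (hX i)

theorem taylor1 {n : ℕ} (z : Fin n → ℝ) (q : RPoly n) : ∃ q' : Fin n → RPoly n,
    q = C (eval z q) + ∑ k, (X k - C (z k)) * q' k ∧ ∀ k, eval z (q' k) = eval z (pderiv k q) := by
  classical
  suffices h : ∃ q' : Fin n → RPoly n, q = C (eval z q) + ∑ k, (X k - C (z k)) * q' k by
    obtain ⟨q', h⟩ := h
    refine ⟨q', h, fun k => ?_⟩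
    have := congrArg (fun p => eval z (pderiv k p)) h
    simp only [map_add, map_sum, Derivation.leibniz, pderiv_C, map_sub, smul_eq_mul, eval_X, eval_C, map_mul,
      pderiv_X, sub_self, zero_mul, zero_add, sub_zero] at this
    rw [this]
    simp [Pi.single_apply, apply_ite]
  induction q using MvPolynomial.induction_on with
  | C a => exact ⟨0, by simp⟩
  | add p q hp hq =>
    obtain ⟨p', hp⟩ := hp
    obtain ⟨q', hq⟩ := hq
    refine ⟨p' + q', ?_⟩
    simp only [Pi.add_apply, mul_add, Finset.sum_add_distrib, map_add]
    nth_rewrite 1 [hp]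
    nth_rewrite 1 [hq]
    ring
  | mul_X p i hp =>
    obtain ⟨p', hp⟩ := hp
    refine ⟨fun k => p' k * X i + if k = i then C (eval z p) else 0, ?_⟩
    simp only [mul_add, Finset.sum_add_distrib, map_mul, eval_X]
    simp only [mul_ite, mul_zero, Finset.sum_ite_eq', Finset.mem_univ, if_true]
    nth_rewrite 1 [hp]
    rw [add_mul, Finset.sum_mul]
    simp only [mul_assoc]
    ring

theorem taylor2 {n : ℕ} (z : Fin n → ℝ) (q : RPoly n) (h0 : eval z q = 0)
    (h1 : ∀ k, eval z (pderiv k q) = 0) : ∃ r : Fin n → Fin n → RPoly n,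
    q = ∑ k, ∑ l, (X k - C (z k)) * (X l - C (z l)) * r k l ∧
    ∀ k l, eval z (pderiv k (pderiv l q)) = eval z (r k l) + eval z (r l k) := by
  classical
  obtain ⟨q', hq, hq'⟩ := taylor1 z q
  rw [h0, map_zero, zero_add] at hq
  choose r hr hr' using fun k => taylor1 z (q' k)
  refine ⟨r, ?_, fun k l => ?_⟩
  · rw [hq]
    refine Finset.sum_congr rfl fun k _ => ?_
    rw [hr k, hq' k, h1 k, map_zero, zero_add, Finset.mul_sum]
    exact Finset.sum_congr rfl fun l _ => by ring
  · have hl : pderiv l q = q' l + ∑ j, (X j - C (z j)) * pderiv l (q' j) := by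
      conv_lhs => rw [hq]
      simp only [map_sum, Derivation.leibniz, map_sub, pderiv_C, pderiv_X, smul_eq_mul, sub_zero]
      rw [Finset.sum_add_distrib, add_comm]
      congr 1
      simp [Pi.single_apply]
    rw [hr', hr', hl, map_add, map_add, add_comm]
    congr 1
    simp only [map_sum, Derivation.leibniz, map_sub, pderiv_C, pderiv_X, smul_eq_mul, sub_zero,
      map_add, map_mul, eval_X, eval_C, sub_self, zero_mul, zero_add]
    simp [Pi.single_apply, apply_ite]

theorem exists_lagrange {n : ℕ} (Z : Finset (Fin n → ℝ)) : ∃ ℓ : (Fin n → ℝ) → RPoly n,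
    ∀ z ∈ Z, ∀ w ∈ Z, eval w (ℓ z) = if w = z then 1 else 0 := by
  classical
  let s : (Fin n → ℝ) → (Fin n → ℝ) → RPoly n := fun z w =>
    C (∑ i, (z i - w i) ^ 2)⁻¹ * ∑ i, C (z i - w i) * (X i - C (w i))
  refine ⟨fun z => ∏ w ∈ Z.erase z, s z w, fun z hz w hw => ?_⟩
  simp only [map_prod]
  split_ifs with h
  · subst h
    refine Finset.prod_eq_one fun v hv => ?_
    have hne : ∑ i, (w i - v i) ^ 2 ≠ 0 := by
      intro h0
      rw [Finset.sum_eq_zero_iff_of_nonneg (fun i _ => sq_nonneg _)] at h0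
      apply (Finset.mem_erase.1 hv).1
      funext i
      have := h0 i (Finset.mem_univ i)
      rw [sq_eq_zero_iff] at this
      linarith
    simp only [s, map_mul, map_sum, eval_C, map_sub, eval_X]
    rw [inv_mul_eq_one₀ hne]
    exact Finset.sum_congr rfl fun i _ => by ring
  · refine Finset.prod_eq_zero (i := w) (Finset.mem_erase.2 ⟨h, hw⟩) ?_
    simp [s]

theorem exists_sep {n : ℕ} (Z : Finset (Fin n → ℝ)) (x : Fin n → ℝ) (hx : x ∉ Z) :
    ∃ s : RPoly n, (∀ z ∈ Z, eval z s = 0) ∧ eval x s ≠ 0 := by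
  refine ⟨∏ w ∈ Z, ∑ i, (X i - C (w i)) ^ 2, fun z hz => ?_, ?_⟩
  · rw [map_prod]
    exact Finset.prod_eq_zero hz (by simp)
  · rw [map_prod, Finset.prod_ne_zero_iff]
    intro w hw h0
    simp only [map_sum, map_pow, map_sub, eval_X, eval_C] at h0
    rw [Finset.sum_eq_zero_iff_of_nonneg (fun i _ => sq_nonneg _)] at h0
    apply hx
    convert hw using 1
    funext i
    have := h0 i (Finset.mem_univ i)
    rw [sq_eq_zero_iff] at this
    linarith

theorem setup {n : ℕ} {M : Set (RPoly n)} (h : QMod M) {R : ℝ}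
    (hR : (C R : RPoly n) - ∑ i, (X i : RPoly n) ^ 2 ∈ M) (Z : Finset (Fin n → ℝ))
    (ℓ : (Fin n → ℝ) → RPoly n)
    (hℓ : ∀ z ∈ Z, ∀ w ∈ Z, eval w (ℓ z) = if w = z then 1 else 0) (c : ℕ → RPoly n)
    (T : Finset ((Fin n → ℝ) × ℕ)) (hT : ∀ t ∈ T, t.1 ∈ Z ∧ eval t.1 (c t.2) = 0 ∧ c t.2 ∈ M) :
    ∃ G : Finset (RPoly n), (∀ g ∈ G, ∀ z ∈ Z, eval z g = 0) ∧
      ∃ u, u = ∑ g ∈ G, g ^ 2 + ∑ t ∈ T, ℓ t.1 ^ 2 * c t.2 ∧ u ∈ M ∧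
      (∀ a, ∀ b ∈ domBy M h u, a * b ∈ domBy M h u) ∧
      (∀ s t, (∀ z ∈ Z, eval z s = 0) → (∀ z ∈ Z, eval z t = 0) → s * t ∈ domBy M h u) ∧
      (∀ t ∈ T, ℓ t.1 ^ 2 * c t.2 ∈ domBy M h u) := by
  classical
  obtain ⟨G, hG⟩ := IsNoetherian.noetherian (vanishingIdeal ℝ (Z : Set (Fin n → ℝ)))
  have hV : ∀ s : RPoly n, s ∈ Submodule.span (RPoly n) (G : Set (RPoly n)) ↔ ∀ z ∈ Z, eval z s = 0 := by
    intro s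
    rw [hG, mem_vanishingIdeal_iff]
    simp [coe_aeval_eq_eval]
  have hGV : ∀ g ∈ G, ∀ z ∈ Z, eval z g = 0 := fun g hg => (hV g).1 (Submodule.subset_span hg)
  refine ⟨G, hGV, _, rfl, ?_⟩
  set u0 := ∑ g ∈ G, g ^ 2 with hu0
  set u1 := ∑ t ∈ T, ℓ t.1 ^ 2 * c t.2 with hu1
  have hu0M : u0 ∈ M := h.sum _ _ fun g _ => h.sq g
  have hu1M : u1 ∈ M := h.sum _ _ fun t ht => h.sqmul _ (hT t ht).2.2
  have huM : u0 + u1 ∈ M := h.add hu0M hu1M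
  have F1 : ∀ s ∈ Submodule.span (RPoly n) (G : Set (RPoly n)), ∃ N : ℝ, 0 ≤ N ∧ N • u0 - s ^ 2 ∈ M := by
    intro s hs
    induction hs using Submodule.span_induction with
    | mem g hg =>
      refine ⟨1, zero_le_one, ?_⟩
      have hg' : g ∈ G := hg
      rw [one_smul, hu0, ← Finset.add_sum_erase _ _ hg', add_sub_cancel_left]
      exact h.sum _ _ fun g _ => h.sq g
    | zero => exact ⟨0, le_rfl, by simpa using h.zero⟩
    | add x y _ _ hx hy =>
      obtain ⟨N, hN, h1⟩ := hx
      obtain ⟨N', hN', h2⟩ := hy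
      refine ⟨2 * N + 2 * N', by positivity, ?_⟩
      convert h.add (h.smul zero_le_two (h.add h1 h2)) (h.sq (x - y)) using 1
      algebra
    | smul a x _ hx =>
      obtain ⟨N, hN, h1⟩ := hx
      obtain ⟨B, hB, -, h2⟩ := arch_all h hR (a ^ 2)
      refine ⟨B * N, by positivity, ?_⟩
      convert h.add (h.smul hB h1) (h.sqmul x h2) using 1
      rw [smul_eq_mul]; algebra
  have F1' : ∀ s, (∀ z ∈ Z, eval z s = 0) → s ^ 2 ∈ domBy M h (u0 + u1) := by
    intro s hs
    obtain ⟨N, hN, h1⟩ := F1 s ((hV s).2 hs)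
    refine ⟨N, hN, h.add (h.smul hN huM) (h.sq s), ?_⟩
    convert h.add h1 (h.smul hN hu1M) using 1
    module
  have F2 : ∀ s t, (∀ z ∈ Z, eval z s = 0) → (∀ z ∈ Z, eval z t = 0) → s * t ∈ domBy M h (u0 + u1) := by
    intro s t hs ht
    have e : s * t = (1/4 : ℝ) • (s + t) ^ 2 - (1/4 : ℝ) • (s - t) ^ 2 := by algebra
    rw [e]
    exact Submodule.sub_mem _
      (Submodule.smul_mem _ _ (F1' _ fun z hz => by rw [map_add, hs z hz, ht z hz, add_zero]))
      (Submodule.smul_mem _ _ (F1' _ fun z hz => by rw [map_sub, hs z hz, ht z hz, sub_zero]))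
  have F3 : ∀ t ∈ T, ℓ t.1 ^ 2 * c t.2 ∈ domBy M h (u0 + u1) := by
    intro t ht
    refine ⟨1, zero_le_one, ?_, ?_⟩
    · rw [one_smul]; exact h.add huM (h.sqmul _ (hT t ht).2.2)
    · rw [one_smul, hu1, ← Finset.add_sum_erase _ _ ht]
      have := h.add hu0M (h.sum (T.erase t) (fun t => ℓ t.1 ^ 2 * c t.2) fun t ht =>
        h.sqmul _ (hT t (Finset.mem_of_mem_erase ht)).2.2)
      convert this using 1
      ring
  have F4' : ∀ a, a ^ 2 * (u0 + u1) ∈ domBy M h (u0 + u1) := by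
    intro a
    rw [mul_add, hu0, hu1, Finset.mul_sum, Finset.mul_sum, ← hu0, ← hu1]
    refine Submodule.add_mem _ (Submodule.sum_mem _ fun g hg => ?_) (Submodule.sum_mem _ fun t ht => ?_)
    · rw [← mul_pow]
      exact F1' _ fun z hz => by rw [map_mul, hGV g hg z hz, mul_zero]
    · have e : a ^ 2 * (ℓ t.1 ^ 2 * c t.2) = (eval t.1 a ^ 2) • (ℓ t.1 ^ 2 * c t.2) +
        (ℓ t.1 * (a ^ 2 - C (eval t.1 a ^ 2))) * (ℓ t.1 * c t.2) := by
        rw [smul_eq_C_mul]; ring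
      obtain ⟨hz, h0, -⟩ := hT t ht
      rw [e]
      refine Submodule.add_mem _ (Submodule.smul_mem _ _ (F3 t ht)) (F2 _ _ (fun w hw => ?_) (fun w hw => ?_))
      · rw [map_mul, hℓ _ hz w hw]
        split_ifs with hw'
        · simp [hw']
        · simp
      · rw [map_mul, hℓ _ hz w hw]
        split_ifs with hw'
        · simp [hw', h0]
        · simp
  have F4'' : ∀ a, ∀ b ∈ domBy M h (u0 + u1), a ^ 2 * b ∈ domBy M h (u0 + u1) := by
    rintro a b ⟨N, hN, h1, h2⟩
    obtain ⟨N', hN', -, h3⟩ := F4' a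
    refine ⟨N * N', by positivity, ?_, ?_⟩
    · convert h.add (h.sqmul a h1) (h.smul hN h3) using 1; algebra
    · convert h.add (h.sqmul a h2) (h.smul hN h3) using 1; algebra
  refine ⟨huM, fun a b hb => ?_, F2, F3⟩
  have e : a * b = (1/4 : ℝ) • ((a + 1) ^ 2 * b) - (1/4 : ℝ) • ((a - 1) ^ 2 * b) := by algebra
  rw [e]
  exact Submodule.sub_mem _ (Submodule.smul_mem _ _ (F4'' _ _ hb)) (Submodule.smul_mem _ _ (F4'' _ _ hb))

open scoped MatrixOrder in
theorem psd_decomp {n : ℕ} (B : Fin n → Fin n → ℝ) (hs : ∀ k l, B k l = B l k)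
    (hB : ∀ y : Fin n → ℝ, 0 ≤ ∑ k, ∑ l, y k * y l * B k l) :
    ∃ S : Fin n → Fin n → ℝ, ∀ k l, B k l = ∑ m, S m k * S m l := by
  have : (Matrix.of B).PosSemidef := by
    refine Matrix.PosSemidef.of_dotProduct_mulVec_nonneg ?_ ?_
    · ext k l; simp [hs l k]
    · intro y
      refine (hB y).trans_eq ?_
      simp only [dotProduct, Matrix.mulVec, Pi.star_apply, star_trivial, Matrix.of_apply, Finset.mul_sum]
      exact Finset.sum_congr rfl fun k _ => Finset.sum_congr rfl fun l _ => by ring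
  obtain ⟨S, hS⟩ := by
    classical
    exact CStarAlgebra.nonneg_iff_eq_star_mul_self.mp this.nonneg
  refine ⟨fun m k => S m k, fun k l => ?_⟩
  have := congrFun (congrFun hS k) l
  simpa [Matrix.mul_apply, Matrix.star_eq_conjTranspose] using this

/-- The Lagrangian second order expansion. -/
theorem lagr_expand {n : ℕ} (E I : Finset ℕ) (c : ℕ → RPoly n) (p : RPoly n) (z : Fin n → ℝ)
    (hzE : ∀ j ∈ E, eval z (c j) = 0) (hp : eval z p = 0) (lamE lamI : ℕ → ℝ)
    (hk : gradP p z = (∑ j ∈ E, lamE j • gradP (c j) z) + ∑ j ∈ I, lamI j • gradP (c j) z)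
    (hc : ∀ j ∈ I, 0 ≤ lamI j ∧ lamI j * eval z (c j) = 0) :
    ∃ r : Fin n → Fin n → RPoly n,
      p = ∑ j ∈ E, lamE j • c j + ∑ j ∈ I, lamI j • c j
        + ∑ k, ∑ l, (X k - C (z k)) * (X l - C (z l)) * r k l ∧
      ∀ k l, (hessP p z k l - ∑ j ∈ E, lamE j * hessP (c j) z k l)
          - ∑ j ∈ I, lamI j * hessP (c j) z k l = eval z (r k l) + eval z (r l k) := by
  have g1 : eval z (p - ∑ j ∈ E, lamE j • c j - ∑ j ∈ I, lamI j • c j) = 0 := by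
    simp only [map_sub, map_sum, smul_eval, hp]
    rw [Finset.sum_eq_zero fun j hj => by rw [hzE j hj, mul_zero],
      Finset.sum_eq_zero fun j hj => (hc j hj).2]
    simp
  have g2 : ∀ k, eval z (pderiv k (p - ∑ j ∈ E, lamE j • c j - ∑ j ∈ I, lamI j • c j)) = 0 := by
    intro k
    have := congrFun hk k
    simp only [gradP, Pi.add_apply, Finset.sum_apply, Pi.smul_apply, smul_eq_mul] at this
    simp only [map_sub, map_sum, Derivation.map_smul, smul_eval, this]
    ring
  obtain ⟨r, h1, h2⟩ := taylor2 z _ g1 g2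
  refine ⟨r, ?_, ?_⟩
  · rw [← h1]; ring
  · intro k l
    rw [← h2]
    simp only [hessP, map_sub, map_sum, Derivation.map_smul, smul_eval]

set_option maxHeartbeats 4000000 in
theorem core {n : ℕ} (E I : Finset ℕ) (c : ℕ → RPoly n) {R : ℝ}
    (hR : (C R : RPoly n) - ∑ i, (X i : RPoly n) ^ 2 ∈ bigM E I c) (p : RPoly n)
    (hp0 : ∀ x ∈ Kset E I c, 0 ≤ eval x p) (Z : Finset (Fin n → ℝ))
    (hZ : ∀ x, x ∈ Z ↔ x ∈ Kset E I c ∧ eval x p = 0)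
    (hopt : ∀ z ∈ Z, OptCondsAt E c I c p z) : p ∈ bigM E I c := by
  classical
  have h := bigM_qmod E I c
  obtain ⟨ℓ, hℓ⟩ := exists_lagrange Z
  set T : Finset ((Fin n → ℝ) × ℕ) := (Z ×ˢ I).filter (fun t => eval t.1 (c t.2) = 0) with hTdef
  have hTm : ∀ z j, (z, j) ∈ T ↔ z ∈ Z ∧ j ∈ I ∧ eval z (c j) = 0 := by
    intro z j; simp [hTdef, and_assoc]
  obtain ⟨G, hG, u, hu, huM, hJ, hVV, hTJ⟩ := setup h hR Z ℓ hℓ c T (by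
    rintro ⟨z, j⟩ ht
    obtain ⟨h1, h2, h3⟩ := (hTm z j).1 ht
    exact ⟨h1, h3, bigM_in h2⟩)
  set M := bigM E I c with hM
  have hord : ∀ b ∈ domBy M h u, ∃ N : ℝ, 0 ≤ N ∧ N • u + b ∈ M ∧ N • u - b ∈ M := fun b hb => hb
  set J := domBy M h u with hJdef
  have huJ : u ∈ J := ⟨1, zero_le_one, by rw [one_smul]; exact h.add huM huM, by simpa using h.zero⟩
  have hEJ : ∀ j ∈ E, ∀ q : RPoly n, q * c j ∈ J := by
    intro j hj q
    refine ⟨0, le_rfl, ?_, ?_⟩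
    · rw [zero_smul, zero_add]; exact bigM_eq hj q
    · rw [zero_smul, zero_sub, ← neg_mul]; exact bigM_eq hj _
  have hℓV : ∀ z ∈ Z, ∀ q : RPoly n, eval z q = 0 → ∀ w ∈ Z, eval w (ℓ z * q) = 0 := by
    intro z hz q hq w hw
    rw [map_mul, hℓ z hz w hw]
    split_ifs with h'
    · rw [h', hq, mul_zero]
    · rw [zero_mul]
  have hXV : ∀ z ∈ Z, ∀ k, ∀ w ∈ Z, eval w (ℓ z * (X k - C (z k))) = 0 := fun z hz k =>
    hℓV z hz _ (by simp)
  -- expansions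
  have hexp : ∀ z ∈ Z, ∃ (lamE lamI : ℕ → ℝ) (r : Fin n → Fin n → RPoly n),
      (∀ j ∈ I, 0 ≤ lamI j ∧ (eval z (c j) ≠ 0 → lamI j = 0) ∧ (eval z (c j) = 0 → 0 < lamI j)) ∧
      ℓ z ^ 2 * p = (∑ j ∈ E, lamE j • (ℓ z ^ 2 * c j) + ∑ j ∈ I, lamI j • (ℓ z ^ 2 * c j))
        + ∑ k, ∑ l, r k l * ((ℓ z * (X k - C (z k))) * (ℓ z * (X l - C (z l)))) ∧
      (∀ v : Fin n → ℝ, v ≠ 0 →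
      (∀ j ∈ E, (∑ i, v i * gradP (c j) z i) = 0) →
      (∀ j ∈ I, eval z (c j) = 0 → (∑ i, v i * gradP (c j) z i) = 0) →
      0 < ∑ i, ∑ i', v i * (eval z (r i i') + eval z (r i' i)) * v i') := by
    intro z hz
    obtain ⟨hzK, hzp⟩ := (hZ z).1 hz
    obtain ⟨-, lamE, lamI, hk, hc, hscc, hsosc⟩ := hopt z hz
    obtain ⟨r, hr1, hr2⟩ := lagr_expand E I c p z hzK.1 hzp lamE lamI hk hc
    refine ⟨lamE, lamI, r, fun j hj => ⟨(hc j hj).1, fun h0 => ?_, fun h0 => ?_⟩, ?_, ?_⟩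
    · exact (mul_eq_zero.1 (hc j hj).2).resolve_right h0
    · have := hscc j hj; rwa [h0, add_zero] at this
    · conv_lhs => rw [hr1]
      rw [mul_add, mul_add, Finset.mul_sum, Finset.mul_sum, Finset.mul_sum]
      simp only [mul_smul_comm, Finset.mul_sum]
      congr 1
      exact Finset.sum_congr rfl fun k _ => Finset.sum_congr rfl fun l _ => by ring
    · intro v hv h1 h2
      have := hsosc v hv h1 h2
      simpa only [hr2] using this
  choose! lamE lamI r hlam hpexp hsosc using hexp
  have hIJ : ∀ z ∈ Z, ∀ j ∈ I, lamI z j • (ℓ z ^ 2 * c j) ∈ J := by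
    intro z hz j hj
    by_cases h0 : eval z (c j) = 0
    · exact Submodule.smul_mem _ _ (hTJ (z, j) ((hTm z j).2 ⟨hz, hj, h0⟩))
    · rw [((hlam z hz j hj).2.1 h0), zero_smul]; exact Submodule.zero_mem _
  have hDJ : ∀ z ∈ Z, ∀ k l, (ℓ z * (X k - C (z k))) * (ℓ z * (X l - C (z l))) ∈ J := fun z hz k l =>
    hVV _ _ (hXV z hz k) (hXV z hz l)
  have hpJ : p ∈ J := by
    have e : p = p * (1 - ∑ z ∈ Z, ℓ z ^ 2) + ∑ z ∈ Z, ℓ z ^ 2 * p := by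
      rw [← Finset.sum_mul]; ring
    rw [e]
    refine J.add_mem (hVV _ _ (fun z hz => ((hZ z).1 hz).2) fun w hw => ?_) (J.sum_mem fun z hz => ?_)
    · simp only [map_sub, map_one, map_sum, map_pow]
      rw [Finset.sum_congr rfl fun z hz => by rw [hℓ z hz w hw]]
      simp [hw]
    · rw [hpexp z hz]
      refine J.add_mem (J.add_mem (J.sum_mem fun j hj => J.smul_mem _ (hEJ j hj _))
        (J.sum_mem fun j hj => hIJ z hz j hj)) (J.sum_mem fun k _ => J.sum_mem fun l _ => hJ _ _ (hDJ z hz k l))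
  by_contra hpM
  obtain ⟨φ, hφe, hφp⟩ := exists_pure h huJ huM hord hpJ hpM
  have hφ := hφe.1
  have hadd := hφ.2.1
  have hsmul := hφ.2.2.1
  have hpos := hφ.2.2.2.1
  have hφu := hφ.2.2.2.2
  have hsub : ∀ a ∈ J, ∀ b ∈ J, φ (a - b) = φ a - φ b := fun a ha b hb => state_sub hφ ha hb
  let x : Fin n → ℝ := fun i => φ (X i * u)
  have hmul0 : ∀ a, ∀ b ∈ J, φ (a * b) = φ (a * u) * φ b := fun a b hb =>
    pure_mul h hφe hJ huJ huM hord a hb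
  have hx : ∀ a, φ (a * u) = eval x a := by
    intro a
    induction a using MvPolynomial.induction_on with
    | C a => rw [← smul_eq_C_mul, hsmul _ _ huJ, hφu, eval_C, mul_one]
    | add p q hp hq => rw [add_mul, hadd _ (hJ _ _ huJ) _ (hJ _ _ huJ), hp, hq, map_add]
    | mul_X p i hp => rw [mul_assoc, hmul0 _ _ (hJ _ _ huJ), hp, map_mul, eval_X]
  have hmul : ∀ a, ∀ b ∈ J, φ (a * b) = eval x a * φ b := fun a b hb => by rw [hmul0 a b hb, hx]
  have hE0 : ∀ j ∈ E, ∀ q : RPoly n, φ (q * c j) = 0 := by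
    intro j hj q
    have h1 := hpos _ (hEJ j hj q) (bigM_eq hj q)
    have h2 := hpos _ (hEJ j hj (-q)) (bigM_eq hj (-q))
    have h3 := hsmul (-1) _ (hEJ j hj q)
    rw [show (-1 : ℝ) • (q * c j) = -q * c j by rw [neg_one_smul, neg_mul]] at h3
    linarith
  by_cases hxZ : x ∈ Z
  swap
  · obtain ⟨s, hsV, hsx⟩ := exists_sep Z x hxZ
    have hsJ : s ^ 2 ∈ J := by rw [sq]; exact hVV _ _ hsV hsV
    have hsx2 : 0 < eval x s ^ 2 := by positivity
    have hs2 : 0 < φ (s ^ 2) := by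
      obtain ⟨N, hN, -, h2⟩ := arch_all h hR u
      have h3 := h.sqmul s h2
      have e : s ^ 2 * (N • 1 - u) = N • s ^ 2 - s ^ 2 * u := by algebra
      rw [e] at h3
      have h4 := hpos _ (J.sub_mem (J.smul_mem _ hsJ) (hJ _ _ huJ)) h3
      rw [hsub _ (J.smul_mem _ hsJ) _ (hJ _ _ huJ), hsmul _ _ hsJ, hx, map_pow] at h4
      by_contra h5
      nlinarith
    have hxK : x ∈ Kset E I c := by
      refine ⟨fun j hj => ?_, fun j hj => ?_⟩
      · have h1 := hE0 j hj (s ^ 2)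
        rw [mul_comm, hmul _ _ hsJ] at h1
        exact (mul_eq_zero.1 h1).resolve_right hs2.ne'
      · have h1 := hpos _ (hJ (c j) _ hsJ) (by rw [mul_comm]; exact h.sqmul s (bigM_in hj))
        rw [hmul _ _ hsJ] at h1
        exact nonneg_of_mul_nonneg_left h1 hs2
    have hpx : 0 < eval x p := lt_of_le_of_ne (hp0 x hxK) fun h0 => hxZ ((hZ x).2 ⟨hxK, h0.symm⟩)
    have h1 := hmul p _ hsJ
    rw [mul_comm, hmul _ _ hpJ, map_pow] at h1
    have h2 := mul_pos hpx hs2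
    nlinarith
  · set z := x with hzdef
    obtain ⟨hzK, hzp⟩ := (hZ z).1 hxZ
    have hℓz : eval z (ℓ z) = 1 := by rw [hℓ z hxZ z hxZ, if_pos rfl]
    have hℓ2 : ∀ b ∈ J, φ (ℓ z ^ 2 * b) = φ b := fun b hb => by
      rw [hmul _ _ hb, map_pow, hℓz]; ring
    let D : Fin n → RPoly n := fun k => ℓ z * (X k - C (z k))
    have hDDJ : ∀ k l, D k * D l ∈ J := fun k l => hDJ z hxZ k l
    let B : Fin n → Fin n → ℝ := fun k l => φ (D k * D l)
    obtain ⟨S, hS⟩ := psd_decomp B (fun k l => by simp only [B, mul_comm]) (by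
      intro y
      have h1 : ∀ w ∈ Z, eval w (∑ k, y k • D k) = 0 := by
        intro w hw
        rw [map_sum]
        exact Finset.sum_eq_zero fun k _ => by rw [smul_eval, hXV z hxZ k w hw, mul_zero]
      have h2 := hpos _ (by rw [sq]; exact hVV _ _ h1 h1) (h.sq (∑ k, y k • D k))
      refine h2.trans_eq ?_
      rw [sq, Finset.sum_mul_sum, state_sum hφ]
      · refine Finset.sum_congr rfl fun k _ => ?_
        rw [state_sum hφ]
        · refine Finset.sum_congr rfl fun l _ => ?_
          rw [smul_mul_smul_comm, hsmul _ _ (hDDJ k l)]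
        · exact fun l _ => by rw [smul_mul_smul_comm]; exact J.smul_mem _ (hDDJ k l)
      · exact fun k _ => J.sum_mem fun l _ => by rw [smul_mul_smul_comm]; exact J.smul_mem _ (hDDJ k l))
    -- active constraints
    have hact : ∀ q : RPoly n, eval z q = 0 → (∀ k, φ ((X k - C (z k)) * (ℓ z ^ 2 * q)) = 0) →
        ∀ m, ∑ i, S m i * gradP q z i = 0 := by
      intro q hq0 hq m
      obtain ⟨q', hq1, hq2⟩ := taylor1 z q
      rw [hq0, map_zero, zero_add] at hq1
      have h1 : ∀ k, ∑ l, gradP q z l * B k l = 0 := by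
        intro k
        rw [← hq k]
        have e : (X k - C (z k)) * (ℓ z ^ 2 * q) = ∑ l, q' l * (D k * D l) := by
          conv_lhs => rw [hq1]
          rw [Finset.mul_sum, Finset.mul_sum]
          exact Finset.sum_congr rfl fun l _ => by simp only [D]; ring
        rw [e, state_sum hφ _ _ fun l _ => hJ _ _ (hDDJ k l)]
        refine Finset.sum_congr rfl fun l _ => ?_
        rw [hmul _ _ (hDDJ k l), hq2 l]; rfl
      have h2 : ∑ m, (∑ i, S m i * gradP q z i) ^ 2 = 0 := by
        calc ∑ m, (∑ i, S m i * gradP q z i) ^ 2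
            = ∑ m, ∑ k, ∑ l, gradP q z k * (gradP q z l * (S m k * S m l)) := by
              refine Finset.sum_congr rfl fun m _ => ?_
              rw [sq, Finset.sum_mul_sum]
              exact Finset.sum_congr rfl fun k _ => Finset.sum_congr rfl fun l _ => by ring
          _ = ∑ k, gradP q z k * ∑ l, gradP q z l * B k l := by
              rw [Finset.sum_comm]
              refine Finset.sum_congr rfl fun k _ => ?_
              rw [Finset.sum_comm, Finset.mul_sum]
              refine Finset.sum_congr rfl fun l _ => ?_
              rw [hS, Finset.mul_sum, Finset.mul_sum]
          _ = 0 := Finset.sum_eq_zero fun k _ => by rw [h1, mul_zero]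
      rw [Finset.sum_eq_zero_iff_of_nonneg (fun i _ => sq_nonneg _)] at h2
      exact pow_eq_zero_iff (two_ne_zero) |>.1 (h2 m (Finset.mem_univ m))
    have hactE : ∀ m, ∀ j ∈ E, ∑ i, S m i * gradP (c j) z i = 0 := fun m j hj =>
      hact (c j) (hzK.1 j hj) (fun k => by rw [← mul_assoc]; exact hE0 j hj _) m
    have hactI : ∀ m, ∀ j ∈ I, eval z (c j) = 0 → ∑ i, S m i * gradP (c j) z i = 0 := fun m j hj h0 =>
      hact (c j) h0 (fun k => by
        rw [hmul _ _ (hTJ (z, j) ((hTm z j).2 ⟨hxZ, hj, h0⟩))]; simp) m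
    let Q : Fin n → ℝ := fun m =>
      ∑ i, ∑ i', S m i * (eval z (r z i i') + eval z (r z i' i)) * S m i'
    have hQ : ∀ m, S m ≠ 0 → 0 < Q m := fun m hm => hsosc z hxZ (S m) hm (hactE m) (hactI m)
    have hQ0 : ∀ m, 0 ≤ Q m := by
      intro m
      by_cases hm : S m = 0
      · simp [Q, hm]
      · exact (hQ m hm).le
    have hIφ : ∀ j ∈ I, 0 ≤ φ (lamI z j • (ℓ z ^ 2 * c j)) := fun j hj =>
      hpos _ (hIJ z hxZ j hj) (h.smul (hlam z hxZ j hj).1 (h.sqmul _ (bigM_in hj)))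
    have hφp2 : φ p = ∑ j ∈ I, φ (lamI z j • (ℓ z ^ 2 * c j)) + (1/2) * ∑ m, Q m := by
      have j1 : ∑ j ∈ E, lamE z j • (ℓ z ^ 2 * c j) ∈ J := J.sum_mem fun j hj => J.smul_mem _ (hEJ j hj _)
      have j2 : ∑ j ∈ I, lamI z j • (ℓ z ^ 2 * c j) ∈ J := J.sum_mem fun j hj => hIJ z hxZ j hj
      have j3 : ∑ k, ∑ l, r z k l * (D k * D l) ∈ J :=
        J.sum_mem fun k _ => J.sum_mem fun l _ => hJ _ _ (hDDJ k l)
      rw [← hℓ2 p hpJ, hpexp z hxZ]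
      change φ (_ + ∑ k, ∑ l, r z k l * (D k * D l)) = _
      rw [hadd _ (J.add_mem j1 j2) _ j3, hadd _ j1 _ j2,
        state_sum hφ _ _ fun j hj => J.smul_mem _ (hEJ j hj _),
        state_sum hφ _ _ fun j hj => hIJ z hxZ j hj,
        Finset.sum_eq_zero fun j hj => by rw [hsmul _ _ (hEJ j hj _), hE0 j hj, mul_zero], zero_add]
      congr 1
      have e1 : φ (∑ k, ∑ l, r z k l * (D k * D l)) = ∑ k, ∑ l, eval z (r z k l) * B k l := by
        rw [state_sum hφ _ _ fun k _ => J.sum_mem fun l _ => hJ _ _ (hDDJ k l)]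
        refine Finset.sum_congr rfl fun k _ => ?_
        rw [state_sum hφ _ _ fun l _ => hJ _ _ (hDDJ k l)]
        exact Finset.sum_congr rfl fun l _ => hmul _ _ (hDDJ k l)
      have e2 : ∑ k, ∑ l, eval z (r z k l) * B k l = ∑ k, ∑ l, eval z (r z l k) * B k l := by
        rw [Finset.sum_comm]
        exact Finset.sum_congr rfl fun l _ => Finset.sum_congr rfl fun k _ => by
          simp only [B, mul_comm]
      have e3 : ∑ m, Q m = ∑ k, ∑ l, (eval z (r z k l) + eval z (r z l k)) * B k l := by
        simp only [Q]
        rw [Finset.sum_comm]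
        refine Finset.sum_congr rfl fun k _ => ?_
        rw [Finset.sum_comm]
        refine Finset.sum_congr rfl fun l _ => ?_
        rw [hS, Finset.mul_sum]
        exact Finset.sum_congr rfl fun m _ => by ring
      rw [e1, e3]
      simp only [add_mul, Finset.sum_add_distrib]
      rw [← e2]; ring
    have hsumI : 0 ≤ ∑ j ∈ I, φ (lamI z j • (ℓ z ^ 2 * c j)) := Finset.sum_nonneg hIφ
    have hsumQ : 0 ≤ ∑ m, Q m := Finset.sum_nonneg fun m _ => hQ0 m
    have hI0 : ∑ j ∈ I, φ (lamI z j • (ℓ z ^ 2 * c j)) = 0 := by linarith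
    have hQs0 : ∑ m, Q m = 0 := by linarith
    rw [Finset.sum_eq_zero_iff_of_nonneg hIφ] at hI0
    rw [Finset.sum_eq_zero_iff_of_nonneg fun m _ => hQ0 m] at hQs0
    have hS0 : ∀ m, S m = 0 := by
      intro m
      by_contra hm
      exact (hQ m hm).ne' (hQs0 m (Finset.mem_univ m))
    have hB0 : ∀ k l, φ (D k * D l) = 0 := by
      intro k l
      change B k l = 0
      rw [hS]
      exact Finset.sum_eq_zero fun m _ => by rw [hS0 m]; simp
    have hsq0 : ∀ s, (∀ w ∈ Z, eval w s = 0) → φ (s ^ 2) = 0 := by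
      intro s hs
      have hsJ : s ^ 2 ∈ J := by rw [sq]; exact hVV _ _ hs hs
      obtain ⟨q', hq1, -⟩ := taylor1 z s
      rw [hs z hxZ, map_zero, zero_add] at hq1
      rw [← hℓ2 _ hsJ]
      have e : ℓ z ^ 2 * s ^ 2 = ∑ k, ∑ l, (q' k * q' l) * (D k * D l) := by
        conv_lhs => rw [hq1]
        rw [← mul_pow, Finset.mul_sum, sq, Finset.sum_mul_sum]
        exact Finset.sum_congr rfl fun k _ => Finset.sum_congr rfl fun l _ => by simp only [D]; ring
      rw [e, state_sum hφ _ _ fun k _ => J.sum_mem fun l _ => hJ _ _ (hDDJ k l)]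
      refine Finset.sum_eq_zero fun k _ => ?_
      rw [state_sum hφ _ _ fun l _ => hJ _ _ (hDDJ k l)]
      refine Finset.sum_eq_zero fun l _ => ?_
      rw [hmul _ _ (hDDJ k l), hB0, mul_zero]
    have hst0 : ∀ s t, (∀ w ∈ Z, eval w s = 0) → (∀ w ∈ Z, eval w t = 0) → φ (s * t) = 0 := by
      intro s t hs ht
      have h1 : ∀ w ∈ Z, eval w (s + t) = 0 := fun w hw => by rw [map_add, hs w hw, ht w hw, add_zero]
      have h2 : ∀ w ∈ Z, eval w (s - t) = 0 := fun w hw => by rw [map_sub, hs w hw, ht w hw, sub_zero]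
      have e : s * t = (1/4 : ℝ) • (s + t) ^ 2 - (1/4 : ℝ) • (s - t) ^ 2 := by algebra
      have m1 : (s + t) ^ 2 ∈ J := by rw [sq]; exact hVV _ _ h1 h1
      have m2 : (s - t) ^ 2 ∈ J := by rw [sq]; exact hVV _ _ h2 h2
      rw [e, hsub _ (J.smul_mem _ m1) _ (J.smul_mem _ m2), hsmul _ _ m1, hsmul _ _ m2, hsq0 _ h1, hsq0 _ h2]
      ring
    have hu0 : φ u = 0 := by
      have g1 : ∀ g ∈ G, g ^ 2 ∈ J := fun g hg => by rw [sq]; exact hVV _ _ (hG g hg) (hG g hg)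
      rw [hu, hadd _ (J.sum_mem g1) _ (J.sum_mem hTJ), state_sum hφ _ _ g1, state_sum hφ _ _ hTJ,
        Finset.sum_eq_zero fun g hg => hsq0 g (hG g hg), zero_add]
      refine Finset.sum_eq_zero ?_
      rintro ⟨w, j⟩ ht
      obtain ⟨hw, hj, h0⟩ := (hTm w j).1 ht
      have htJ := hTJ _ ht
      simp only at htJ ⊢
      by_cases hwz : w = z
      · subst hwz
        have := hI0 j hj
        rw [hsmul _ _ htJ] at this
        exact (mul_eq_zero.1 this).resolve_left ((hlam _ hxZ j hj).2.2 h0).ne'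
      · have e1 := hmul (ℓ z) _ htJ
        rw [hℓz, one_mul] at e1
        rw [← e1, show ℓ z * (ℓ w ^ 2 * c j) = (ℓ w * ℓ z) * (ℓ w * c j) by ring]
        refine hst0 _ _ (hℓV w hw _ ?_) (hℓV w hw _ h0)
        rw [hℓ z hxZ w hw, if_neg hwz]
    rw [hφu] at hu0
    exact one_ne_zero hu0

theorem mem_ideal_repr {n : ℕ} (E : Finset ℕ) (c : ℕ → RPoly n) {p : RPoly n}
    (hp : p ∈ IdealFull E c) : ∃ q : ℕ → RPoly n, p = ∑ j ∈ E, c j * q j := by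
  classical
  have hp' : p ∈ Ideal.span (c '' (E : Set ℕ)) := hp
  induction hp' using Submodule.span_induction with
  | mem x hx =>
    obtain ⟨j, hj, rfl⟩ := hx
    refine ⟨fun i => if i = j then 1 else 0, ?_⟩
    rw [Finset.sum_eq_single j]
    · simp
    · intro i _ hi; simp [hi]
    · intro h; exact absurd hj h
  | zero => exact ⟨fun _ => 0, by simp⟩
  | add x y hx hy h1 h2 =>
    obtain ⟨q1, e1⟩ := h1 hx
    obtain ⟨q2, e2⟩ := h2 hy
    exact ⟨fun j => q1 j + q2 j, by simp only [mul_add, Finset.sum_add_distrib]; rw [← e1, ← e2]⟩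
  | smul r x hx h1 =>
    obtain ⟨q1, e1⟩ := h1 hx
    refine ⟨fun j => r * q1 j, ?_⟩
    rw [smul_eq_mul]
    conv_lhs => rw [e1, Finset.mul_sum]
    exact Finset.sum_congr rfl fun j _ => by ring

theorem bigM_eval_nonneg {n : ℕ} {E I : Finset ℕ} {c : ℕ → RPoly n} {p : RPoly n}
    (hp : p ∈ bigM E I c) {x : Fin n → ℝ} (hx : x ∈ Kset E I c) : 0 ≤ eval x p := by
  obtain ⟨p1, h1, p2, ⟨σ0, σ, hσ0, hσ, rfl⟩, rfl⟩ := hp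
  obtain ⟨q, rfl⟩ := mem_ideal_repr E c h1
  simp only [map_add, map_sum, map_mul]
  rw [Finset.sum_eq_zero fun j hj => by rw [hx.1 j hj, zero_mul], zero_add]
  exact add_nonneg (hσ0.eval_nonneg x)
    (Finset.sum_nonneg fun j hj => mul_nonneg (hx.2 j hj) ((hσ j hj).eval_nonneg x))

theorem continuous_evalP {n : ℕ} (p : RPoly n) : Continuous fun x : Fin n → ℝ => eval x p :=
  MvPolynomial.continuous_eval p

theorem Kset_compact {n : ℕ} {E I : Finset ℕ} {c : ℕ → RPoly n} {R : ℝ}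
    (hR : (C R : RPoly n) - ∑ i, (X i : RPoly n) ^ 2 ∈ bigM E I c) : IsCompact (Kset E I c) := by
  have hcl : IsClosed (Kset E I c) := by
    have : Kset E I c = (⋂ j ∈ E, {x | eval x (c j) = 0}) ∩ ⋂ j ∈ I, {x | 0 ≤ eval x (c j)} := by
      ext x; simp [Kset]
    rw [this]
    exact (isClosed_biInter fun j _ => isClosed_eq (continuous_evalP _) continuous_const).inter
      (isClosed_biInter fun j _ => isClosed_le continuous_const (continuous_evalP _))
  refine Metric.isCompact_of_isClosed_isBounded hcl ?_
  refine (Metric.isBounded_closedBall (x := (0 : Fin n → ℝ)) (r := Real.sqrt R)).subset fun x hx => ?_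
  have h1 := bigM_eval_nonneg hR hx
  simp only [map_sub, eval_C, map_sum, map_pow, eval_X] at h1
  rw [mem_closedBall_zero_iff, pi_norm_le_iff_of_nonneg (Real.sqrt_nonneg _)]
  intro i
  rw [Real.norm_eq_abs]
  apply Real.abs_le_sqrt
  have := Finset.single_le_sum (f := fun i => x i ^ 2) (fun j _ => sq_nonneg _) (Finset.mem_univ i)
  linarith

open Filter Topology in
theorem zeros_finite {n : ℕ} (E I : Finset ℕ) (c : ℕ → RPoly n) (hK : IsCompact (Kset E I c))
    (p : RPoly n)
    (hopt : ∀ z, z ∈ Kset E I c → eval z p = 0 → OptCondsAt E c I c p z) :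
    {x | x ∈ Kset E I c ∧ eval x p = 0}.Finite := by
  by_contra hinf
  have hScl : IsClosed {x | x ∈ Kset E I c ∧ eval x p = 0} :=
    hK.isClosed.inter (isClosed_eq (continuous_evalP p) continuous_const)
  obtain ⟨z, hzK, hz⟩ := Set.Infinite.exists_accPt_of_subset_isCompact hinf hK (fun x hx => hx.1)
  have hzS := hScl.closure_subset (by
    rw [mem_closure_iff_clusterPt]; exact hz.clusterPt)
  have hzp := hzS.2
  rw [accPt_principal_iff_clusterPt, ← mem_closure_iff_clusterPt, mem_closure_iff_seq_limit] at hz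
  obtain ⟨x, hxS, hxz⟩ := hz
  have hne : ∀ k, x k - z ≠ 0 := fun k h => (hxS k).2 (sub_eq_zero.1 h)
  have ht : ∀ k, 0 < ‖x k - z‖ := fun k => norm_pos_iff.2 (hne k)
  obtain ⟨v, hv, s, hs, hsv⟩ := (isCompact_sphere (0 : Fin n → ℝ) 1).tendsto_subseq
    (x := fun k => (‖x k - z‖)⁻¹ • (x k - z)) (fun k => by
      rw [mem_sphere_zero_iff_norm, norm_smul, norm_inv, norm_norm, inv_mul_cancel₀ (ht k).ne'])
  have hv0 : v ≠ 0 := by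
    rintro rfl; simp at hv
  have hxz' := hxz.comp hs.tendsto_atTop
  set y := x ∘ s with hy
  have hyS : ∀ k, y k ∈ Kset E I c ∧ eval (y k) p = 0 := fun k => (hxS (s k)).1
  have hyt : ∀ k, 0 < ‖y k - z‖ := fun k => ht (s k)
  have hd : ∀ i, Tendsto (fun k => (‖y k - z‖)⁻¹ * (y k i - z i)) atTop (𝓝 (v i)) := by
    intro i
    exact (tendsto_pi_nhds.1 hsv i)
  have hq : ∀ q : RPoly n, Tendsto (fun k => eval (y k) q) atTop (𝓝 (eval z q)) := fun q =>
    ((continuous_evalP q).tendsto z).comp hxz'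
  have hfirst : ∀ q : RPoly n, eval z q = 0 →
      Tendsto (fun k => (‖y k - z‖)⁻¹ * eval (y k) q) atTop (𝓝 (∑ i, v i * gradP q z i)) := by
    intro q hq0
    obtain ⟨q', h1, h2⟩ := taylor1 z q
    have h3 : Tendsto (fun k => ∑ i, ((‖y k - z‖)⁻¹ * (y k i - z i)) * eval (y k) (q' i)) atTop
        (𝓝 (∑ i, v i * gradP q z i)) := by
      refine tendsto_finsetSum _ fun i _ => ?_
      have := (hd i).mul (hq (q' i))
      rwa [h2 i] at this
    refine h3.congr fun k => ?_
    conv_rhs => rw [h1]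
    rw [hq0]
    simp only [map_zero, zero_add, map_sum, map_mul, map_sub, eval_X, eval_C, Finset.mul_sum, mul_assoc]
  obtain ⟨-, lamE, lamI, hk, hc, hscc, hsosc⟩ := hopt z hzK hzp
  have hE0 : ∀ j ∈ E, ∑ i, v i * gradP (c j) z i = 0 := fun j hj =>
    tendsto_nhds_unique ((hfirst (c j) (hzK.1 j hj)).congr fun k => by
      rw [(hyS k).1.1 j hj, mul_zero]) tendsto_const_nhds
  have hI0 : ∀ j ∈ I, eval z (c j) = 0 → 0 ≤ ∑ i, v i * gradP (c j) z i := fun j hj h0 =>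
    ge_of_tendsto' (hfirst (c j) h0) fun k =>
      mul_nonneg (inv_nonneg.2 (hyt k).le) ((hyS k).1.2 j hj)
  have hp0 : ∑ i, v i * gradP p z i = 0 :=
    tendsto_nhds_unique ((hfirst p hzp).congr fun k => by
      rw [(hyS k).2, mul_zero]) tendsto_const_nhds
  have hsum : ∑ j ∈ I, lamI j * ∑ i, v i * gradP (c j) z i = 0 := by
    have e : ∑ i, v i * gradP p z i = ∑ j ∈ E, lamE j * ∑ i, v i * gradP (c j) z i
        + ∑ j ∈ I, lamI j * ∑ i, v i * gradP (c j) z i := by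
      rw [hk]
      simp only [Pi.add_apply, Finset.sum_apply, Pi.smul_apply, smul_eq_mul, mul_add,
        Finset.sum_add_distrib, Finset.mul_sum]
      rw [Finset.sum_comm]
      congr 1
      · exact Finset.sum_congr rfl fun k _ => Finset.sum_congr rfl fun l _ => by ring
      · rw [Finset.sum_comm]
        exact Finset.sum_congr rfl fun k _ => Finset.sum_congr rfl fun l _ => by ring
    rw [hp0, Finset.sum_eq_zero fun j hj => by rw [hE0 j hj, mul_zero], zero_add] at e
    exact e.symm
  have hlam0 : ∀ j ∈ I, eval z (c j) ≠ 0 → lamI j = 0 := fun j hj h0 =>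
    (mul_eq_zero.1 (hc j hj).2).resolve_right h0
  have hnn : ∀ j ∈ I, 0 ≤ lamI j * ∑ i, v i * gradP (c j) z i := by
    intro j hj
    by_cases h0 : eval z (c j) = 0
    · exact mul_nonneg (hc j hj).1 (hI0 j hj h0)
    · rw [hlam0 j hj h0, zero_mul]
  rw [Finset.sum_eq_zero_iff_of_nonneg hnn] at hsum
  have hI1 : ∀ j ∈ I, eval z (c j) = 0 → ∑ i, v i * gradP (c j) z i = 0 := by
    intro j hj h0
    have h1 := hscc j hj
    rw [h0, add_zero] at h1
    exact (mul_eq_zero.1 (hsum j hj)).resolve_left h1.ne'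
  have hpos := hsosc v hv0 hE0 hI1
  obtain ⟨r, hr1, hr2⟩ := lagr_expand E I c p z hzK.1 hzp lamE lamI hk hc
  simp only [hr2] at hpos
  have hlim : Tendsto (fun k => ∑ i, ∑ i', ((‖y k - z‖)⁻¹ * (y k i - z i)) *
      ((‖y k - z‖)⁻¹ * (y k i' - z i')) * eval (y k) (r i i')) atTop
      (𝓝 (∑ i, ∑ i', v i * v i' * eval z (r i i'))) :=
    tendsto_finsetSum _ fun i _ => tendsto_finsetSum _ fun i' _ => ((hd i).mul (hd i')).mul (hq _)
  have hle : ∑ i, ∑ i', v i * v i' * eval z (r i i') ≤ 0 := by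
    refine le_of_tendsto' hlim fun k => ?_
    have h1 := congrArg (eval (y k)) hr1
    rw [(hyS k).2] at h1
    simp only [map_add, map_sum, map_mul, map_sub, eval_X, eval_C, smul_eval] at h1
    rw [Finset.sum_eq_zero fun j hj => by rw [(hyS k).1.1 j hj, mul_zero], zero_add] at h1
    have h2 : 0 ≤ ∑ j ∈ I, lamI j * eval (y k) (c j) := Finset.sum_nonneg fun j hj =>
      mul_nonneg (hc j hj).1 ((hyS k).1.2 j hj)
    have h3 : ∑ i, ∑ i', (y k i - z i) * (y k i' - z i') * eval (y k) (r i i') ≤ 0 := by linarith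
    have e : ∑ i, ∑ i', ((‖y k - z‖)⁻¹ * (y k i - z i)) *
      ((‖y k - z‖)⁻¹ * (y k i' - z i')) * eval (y k) (r i i') = ((‖y k - z‖)⁻¹) ^ 2 *
        ∑ i, ∑ i', (y k i - z i) * (y k i' - z i') * eval (y k) (r i i') := by
      simp only [Finset.mul_sum]
      exact Finset.sum_congr rfl fun k _ => Finset.sum_congr rfl fun l _ => by ring
    rw [e]
    exact mul_nonpos_of_nonneg_of_nonpos (sq_nonneg _) h3
  have e : ∑ i, ∑ i', v i * (eval z (r i i') + eval z (r i' i)) * v i'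
      = 2 * ∑ i, ∑ i', v i * v i' * eval z (r i i') := by
    have e2 : ∑ i, ∑ i', v i * v i' * eval z (r i i') = ∑ i, ∑ i', v i * v i' * eval z (r i' i) := by
      rw [Finset.sum_comm]
      exact Finset.sum_congr rfl fun k _ => Finset.sum_congr rfl fun l _ => by ring
    rw [two_mul]
    nth_rewrite 2 [e2]
    simp only [← Finset.sum_add_distrib]
    exact Finset.sum_congr rfl fun k _ => Finset.sum_congr rfl fun l _ => by ring
  rw [e] at hpos
  linarith

theorem compact_convexHull {V : Type*} [NormedAddCommGroup V] [NormedSpace ℝ V]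
    [FiniteDimensional ℝ V] {S : Set V} (hS : IsCompact S) : IsCompact (convexHull ℝ S) := by
  classical
  rcases S.eq_empty_or_nonempty with rfl | ⟨s0, hs0⟩
  · simp
  let N := Module.finrank ℝ V + 1
  have hc : IsCompact ((stdSimplex ℝ (Fin N)) ×ˢ (Set.univ.pi fun _ : Fin N => S)) :=
    (isCompact_stdSimplex ℝ (Fin N)).prod (isCompact_univ_pi fun _ => hS)
  have him := hc.image (f := fun p : (Fin N → ℝ) × (Fin N → V) => ∑ j, p.1 j • p.2 j) (by fun_prop)
  convert him using 1
  apply Set.Subset.antisymm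
  · intro x hx
    obtain ⟨ι, hι, z, w, hz, hind, hw, hw1, hx⟩ := eq_pos_convex_span_of_mem_convexHull hx
    have hcard : Fintype.card ι ≤ Fintype.card (Fin N) := by
      have := hind.card_le_finrank_succ
      rw [Fintype.card_fin]
      exact this.trans (Nat.succ_le_succ (Submodule.finrank_le _))
    obtain ⟨e⟩ := Function.Embedding.nonempty_of_card_le hcard
    refine ⟨(Function.extend e w 0, Function.extend e z (fun _ => s0)), ⟨⟨fun j => ?_, ?_⟩, fun j _ => ?_⟩, ?_⟩
    · by_cases hj : ∃ i, e i = j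
      · obtain ⟨i, rfl⟩ := hj
        simp only [e.injective.extend_apply]; exact (hw i).le
      · simp only [Function.extend_apply' _ _ _ hj]; simp
    · rw [← hw1]
      refine (Fintype.sum_of_injective e e.injective _ _ (fun j hj => ?_) fun i => ?_).symm
      · simp only [Function.extend_apply' _ _ _ hj]; simp
      · simp only [e.injective.extend_apply]
    · by_cases hj : ∃ i, e i = j
      · obtain ⟨i, rfl⟩ := hj
        simp only [e.injective.extend_apply]; exact hz ⟨i, rfl⟩
      · simp only [Function.extend_apply' _ _ _ hj]; exact hs0
    · rw [← hx]
      refine (Fintype.sum_of_injective e e.injective _ _ (fun j hj => ?_) fun i => ?_).symm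
      · simp only [Function.extend_apply' _ _ _ hj]; simp
      · simp only [e.injective.extend_apply]
  · rintro _ ⟨⟨w, z⟩, ⟨hw, hz⟩, rfl⟩
    exact mem_convexHull_of_exists_fintype w z hw.1 hw.2 (fun i => hz i (Set.mem_univ i)) rfl

theorem integ_poly {n : ℕ} {K : Set (Fin n → ℝ)} (hK : IsCompact K) (μ : Measure (Fin n → ℝ))
    [IsFiniteMeasure μ] (hμ : μ Kᶜ = 0) (p : RPoly n) : Integrable (fun x => eval x p) μ := by
  have h1 : IntegrableOn (fun x => eval x p) K μ :=
    (continuous_evalP p).continuousOn.integrableOn_compact hK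
  have : μ.restrict K = μ := Measure.restrict_eq_self_of_ae_mem (by
    rw [ae_iff]; exact hμ)
  rwa [IntegrableOn, this] at h1

open scoped Pointwise in
theorem strong_dual {n m m1 : ℕ} {K : Set (Fin n → ℝ)} (hK : IsCompact K) (f : RPoly n)
    (a : Fin m → RPoly n) (b : Fin m → ℝ) (v : ℝ)
    (hmax : ∀ θ : Fin m → ℝ, (∀ i : Fin m, m1 ≤ (i : ℕ) → 0 ≤ θ i) →
      (∀ x ∈ K, 0 ≤ eval x f - ∑ i, θ i * eval x (a i)) → ∑ i, b i * θ i ≤ v)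
    (θb : Fin m → ℝ) (hθb : ∀ i : Fin m, m1 ≤ (i : ℕ) → 0 ≤ θb i) (ε : ℝ) (hε : 0 < ε)
    (hsl : ∀ x ∈ K, ε ≤ eval x f - ∑ i, θb i * eval x (a i)) :
    ∃ μ : Measure (Fin n → ℝ), IsFiniteMeasure μ ∧ μ Kᶜ = 0 ∧
      (∀ i : Fin m, (i : ℕ) < m1 → ∫ x, eval x (a i) ∂μ = b i) ∧
      (∀ i : Fin m, m1 ≤ (i : ℕ) → b i ≤ ∫ x, eval x (a i) ∂μ) ∧ ∫ x, eval x f ∂μ ≤ v := by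
  classical
  set R : ℝ := (|v - ∑ i, b i * θb i| + 1) / ε with hRdef
  have hR : 0 < R := by positivity
  have hRε : v - ∑ i, b i * θb i < R * ε := by
    rw [hRdef, div_mul_cancel₀ _ hε.ne']
    exact lt_of_le_of_lt (le_abs_self _) (lt_add_one _)
  let G : (Fin n → ℝ) → (Fin m → ℝ) × ℝ := fun x => (fun i => eval x (a i), eval x f)
  have hG : Continuous G := by
    refine Continuous.prodMk (continuous_pi fun i => continuous_evalP _) (continuous_evalP _)
  let S : Set ((Fin m → ℝ) × ℝ) := insert 0 ((fun x => R • G x) '' K)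
  have hS : IsCompact S := (hK.image (hG.const_smul R)).insert 0
  let cone : Set ((Fin m → ℝ) × ℝ) := {p | (∀ i : Fin m, (i : ℕ) < m1 → p.1 i = 0) ∧
    (∀ i : Fin m, m1 ≤ (i : ℕ) → p.1 i ≤ 0) ∧ 0 ≤ p.2}
  have hcone_cl : IsClosed cone := by
    have : cone = (⋂ i : Fin m, ⋂ _ : (i : ℕ) < m1, {p | p.1 i = 0}) ∩
        ((⋂ i : Fin m, ⋂ _ : m1 ≤ (i : ℕ), {p | p.1 i ≤ 0}) ∩ {p | 0 ≤ p.2}) := by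
      ext p; simp [cone]
    rw [this]
    refine (isClosed_iInter fun i => isClosed_iInter fun _ => isClosed_eq (by fun_prop) (by fun_prop)).inter
      ((isClosed_iInter fun i => isClosed_iInter fun _ => isClosed_le (by fun_prop) (by fun_prop)).inter
        (isClosed_le (by fun_prop) (by fun_prop)))
  have hcone_cv : Convex ℝ cone := by
    intro p hp q hq s t hs ht _
    refine ⟨fun i hi => ?_, fun i hi => ?_, ?_⟩
    · simp [hp.1 i hi, hq.1 i hi]
    · have h1 := hp.2.1 i hi
      have h2 := hq.2.1 i hi
      simp only [Prod.fst_add, Prod.smul_fst, Pi.add_apply, Pi.smul_apply, smul_eq_mul]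
      nlinarith
    · have h1 := hp.2.2
      have h2 := hq.2.2
      simp only [Prod.snd_add, Prod.smul_snd, smul_eq_mul]
      positivity
  by_cases hmem : (b, v) ∈ convexHull ℝ S + cone
  · obtain ⟨w, hw, k, hk, hwk⟩ := hmem
    let W : Set ((Fin m → ℝ) × ℝ) := {w | ∃ μ : Measure (Fin n → ℝ), IsFiniteMeasure μ ∧ μ Kᶜ = 0 ∧
      w = (fun i => ∫ x, eval x (a i) ∂μ, ∫ x, eval x f ∂μ)}
    have hW : w ∈ W := by
      refine convexHull_min ?_ ?_ hw
      · rintro _ (rfl | ⟨x, hx, rfl⟩)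
        · refine ⟨0, inferInstance, by simp, ?_⟩
          simp only [integral_zero_measure]; rfl
        · refine ⟨ENNReal.ofReal R • Measure.dirac x, ?_, ?_, ?_⟩
          · exact ⟨by simp⟩
          · simp [hK.isClosed.isOpen_compl.measurableSet, hx]
          · simp only [integral_smul_measure, integral_dirac, ENNReal.toReal_ofReal hR.le]
            rfl
      · rintro _ ⟨μ, hμ, hμK, rfl⟩ _ ⟨ν, hν, hνK, rfl⟩ s t hs ht _
        have f1 : IsFiniteMeasure (ENNReal.ofReal s • μ) := Measure.smul_finite _ (by simp)
        have f2 : IsFiniteMeasure (ENNReal.ofReal t • ν) := Measure.smul_finite _ (by simp)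
        have k1 : (ENNReal.ofReal s • μ) Kᶜ = 0 := by simp [hμK]
        have k2 : (ENNReal.ofReal t • ν) Kᶜ = 0 := by simp [hνK]
        refine ⟨ENNReal.ofReal s • μ + ENNReal.ofReal t • ν, inferInstance, by simp [hμK, hνK], ?_⟩
        have key : ∀ p : RPoly n, ∫ x, eval x p ∂(ENNReal.ofReal s • μ + ENNReal.ofReal t • ν)
            = s * ∫ x, eval x p ∂μ + t * ∫ x, eval x p ∂ν := by
          intro p
          rw [integral_add_measure (integ_poly hK _ k1 p) (integ_poly hK _ k2 p), integral_smul_measure,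
            integral_smul_measure, ENNReal.toReal_ofReal hs, ENNReal.toReal_ofReal ht]
          rfl
        simp only [key]
        rfl
    obtain ⟨μ, hμ, hμK, rfl⟩ := hW
    refine ⟨μ, hμ, hμK, fun i hi => ?_, fun i hi => ?_, ?_⟩
    · have := congrFun (congrArg Prod.fst hwk) i
      simp only [Prod.fst_add, Pi.add_apply, hk.1 i hi, add_zero] at this
      exact this
    · have := congrFun (congrArg Prod.fst hwk) i
      have h2 := hk.2.1 i hi
      simp only [Prod.fst_add, Pi.add_apply] at this
      linarith
    · have := congrArg Prod.snd hwk
      have h2 := hk.2.2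
      simp only [Prod.snd_add] at this
      linarith
  · exfalso
    obtain ⟨L, u, hLb, hLT⟩ := geometric_hahn_banach_point_closed ((convex_convexHull ℝ S).add hcone_cv)
      (hcone_cl.add_left_of_isCompact (compact_convexHull hS)) hmem
    set τ := L (0, 1) with hτ
    let θ : Fin m → ℝ := fun i => - L (Pi.single i 1, 0)
    have hL : ∀ p : (Fin m → ℝ) × ℝ, L p = τ * p.2 - ∑ i, θ i * p.1 i := by
      intro p
      have e : p = ∑ i, p.1 i • ((Pi.single i 1, 0) : (Fin m → ℝ) × ℝ) + p.2 • (0, 1) := by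
        refine Prod.ext ?_ ?_
        · ext j
          simp [Prod.fst_sum, Finset.sum_apply, Pi.single_apply]
        · simp [Prod.snd_sum]
      conv_lhs => rw [e]
      simp only [map_add, map_sum, map_smul, smul_eq_mul, θ, neg_mul, Finset.sum_neg_distrib]
      rw [← hτ, sub_neg_eq_add, add_comm, mul_comm]
      congr 1
      exact Finset.sum_congr rfl fun i _ => mul_comm _ _
    have h0S : (0 : (Fin m → ℝ) × ℝ) ∈ convexHull ℝ S := subset_convexHull ℝ S (Set.mem_insert _ _)
    have hcT : ∀ k ∈ cone, u < L k := fun k hk => hLT k ⟨0, h0S, k, hk, zero_add k⟩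
    have h0c : (0 : (Fin m → ℝ) × ℝ) ∈ cone := ⟨fun _ _ => rfl, fun _ _ => le_rfl, le_rfl⟩
    have hu0 : u < 0 := by simpa using hcT 0 h0c
    have hcpos : ∀ k ∈ cone, 0 ≤ L k := by
      intro k hk
      by_contra hneg
      push Not at hneg
      have hc : 0 ≤ u / L k := (div_pos_of_neg_of_neg hu0 hneg).le
      have h1 : (u / L k) • k ∈ cone := by
        refine ⟨fun i hi => ?_, fun i hi => ?_, ?_⟩
        · simp [hk.1 i hi]
        · have := hk.2.1 i hi
          simp only [Prod.smul_fst, Pi.smul_apply, smul_eq_mul]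
          exact mul_nonpos_of_nonneg_of_nonpos hc this
        · exact mul_nonneg hc hk.2.2
      have h2 := hcT _ h1
      rw [map_smul, smul_eq_mul, div_mul_cancel₀ _ hneg.ne] at h2
      exact lt_irrefl _ h2
    have hτ0 : 0 ≤ τ := hcpos (0, 1) ⟨fun _ _ => rfl, fun _ _ => le_rfl, zero_le_one⟩
    have hθ0 : ∀ i : Fin m, m1 ≤ (i : ℕ) → 0 ≤ θ i := by
      intro i hi
      have h1 := hcpos (-Pi.single i 1, 0) ⟨fun j hj => ?_, fun j hj => ?_, le_rfl⟩
      · have e : ((-Pi.single i 1, 0) : (Fin m → ℝ) × ℝ) = -(Pi.single i 1, 0) := by simp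
        rw [e, map_neg] at h1
        exact h1
      · have : j ≠ i := by rintro rfl; omega
        simp [this]
      · simp only [Pi.neg_apply, Left.neg_nonpos_iff, Pi.single_apply]
        split_ifs <;> norm_num
    have hδ : 0 < ∑ i, b i * θ i - τ * v := by
      have := hLb.trans hu0
      rw [hL] at this
      simp only [mul_comm (θ _)] at this
      linarith
    set δ := ∑ i, b i * θ i - τ * v with hδdef
    have hKx : ∀ x ∈ K, -δ < R * (τ * eval x f - ∑ i, θ i * eval x (a i)) := by
      intro x hx
      have h1 := hLT (R • G x) ⟨R • G x, subset_convexHull ℝ S (Set.mem_insert_of_mem _ ⟨x, hx, rfl⟩),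
        0, h0c, add_zero _⟩
      rw [map_smul, hL, smul_eq_mul] at h1
      rw [hL] at hLb
      simp only [mul_comm (θ _)] at hLb
      simp only [G] at h1
      linarith
    set lam := δ / (R * ε) with hlam
    have hlam0 : 0 < lam := by positivity
    have hlamR : R * (lam * ε) = δ := by rw [hlam]; field_simp
    have hden : 0 < τ + lam := by linarith
    have hfin := hmax (fun i => (θ i + lam * θb i) / (τ + lam)) (fun i hi => by
      have h1 := hθ0 i hi
      have h2 := hθb i hi
      positivity) (fun x hx => by
      have h1 := hKx x hx
      have h2 := mul_le_mul_of_nonneg_left (hsl x hx) hlam0.le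
      have h2' := mul_le_mul_of_nonneg_left h2 hR.le
      have e : eval x f - ∑ i, (θ i + lam * θb i) / (τ + lam) * eval x (a i)
          = ((τ * eval x f - ∑ i, θ i * eval x (a i)) + lam * (eval x f - ∑ i, θb i * eval x (a i)))
            / (τ + lam) := by
        rw [eq_div_iff hden.ne', sub_mul, Finset.sum_mul]
        have : ∑ i, (θ i + lam * θb i) / (τ + lam) * eval x (a i) * (τ + lam) =
          ∑ i, θ i * eval x (a i) + lam * ∑ i, θb i * eval x (a i) := by
          rw [Finset.mul_sum, ← Finset.sum_add_distrib]
          exact Finset.sum_congr rfl fun i _ => by field_simp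
        rw [this]; ring
      rw [e]
      refine div_nonneg ?_ hden.le
      refine nonneg_of_mul_nonneg_right (a := R) ?_ hR
      rw [mul_add]; linarith)
    have e : ∑ i, b i * ((θ i + lam * θb i) / (τ + lam)) =
        (∑ i, b i * θ i + lam * ∑ i, b i * θb i) / (τ + lam) := by
      rw [Finset.mul_sum, ← Finset.sum_add_distrib, Finset.sum_div]
      exact Finset.sum_congr rfl fun i _ => by ring
    rw [e, div_le_iff₀ hden] at hfin
    have h1 : δ ≤ lam * (v - ∑ i, b i * θb i) := by rw [hδdef]; linarith
    have h2 := mul_lt_mul_of_pos_left hRε hlam0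
    have h3 : lam * (R * ε) = δ := by rw [← hlamR]; ring
    linarith

theorem pairing_eq_of_subset {n : ℕ} (p : RPoly n) (y : (Fin n →₀ ℕ) → ℝ)
    {s : Finset (Fin n →₀ ℕ)} (hs : p.support ⊆ s) : pairing p y = ∑ α ∈ s, p.coeff α * y α :=
  Finset.sum_subset hs fun α _ hα => by rw [notMem_support_iff.1 hα, zero_mul]

theorem pairing_add {n : ℕ} (p q : RPoly n) (y : (Fin n →₀ ℕ) → ℝ) :
    pairing (p + q) y = pairing p y + pairing q y := by
  classical
  rw [pairing_eq_of_subset (p + q) y support_add,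
    pairing_eq_of_subset p y (Finset.subset_union_left (s₂ := q.support)),
    pairing_eq_of_subset q y (Finset.subset_union_right (s₁ := p.support)), ← Finset.sum_add_distrib]
  exact Finset.sum_congr rfl fun α _ => by rw [coeff_add]; ring

theorem pairing_zero {n : ℕ} (y : (Fin n →₀ ℕ) → ℝ) : pairing (0 : RPoly n) y = 0 := by
  simp [pairing]

theorem pairing_C_mul {n : ℕ} (r : ℝ) (p : RPoly n) (y : (Fin n →₀ ℕ) → ℝ) :
    pairing (C r * p) y = r * pairing p y := by
  rw [pairing_eq_of_subset (C r * p) y (s := p.support) (by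
    intro α hα
    rw [mem_support_iff, coeff_C_mul] at hα
    exact mem_support_iff.2 (right_ne_zero_of_mul hα)), pairing, Finset.mul_sum]
  exact Finset.sum_congr rfl fun α _ => by rw [coeff_C_mul]; ring

theorem pairing_sum {n : ℕ} {ι : Type*} (s : Finset ι) (g : ι → RPoly n) (y : (Fin n →₀ ℕ) → ℝ) :
    pairing (∑ i ∈ s, g i) y = ∑ i ∈ s, pairing (g i) y := by
  classical
  induction s using Finset.induction_on with
  | empty => simp [pairing_zero]
  | insert i s hi ih => rw [Finset.sum_insert hi, Finset.sum_insert hi, pairing_add, ih]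

theorem pairing_list {n : ℕ} (g : RPoly n) (L : List (RPoly n)) (y : (Fin n →₀ ℕ) → ℝ)
    (h : ∀ q ∈ L, 0 ≤ pairing (g * q ^ 2) y) :
    0 ≤ pairing (g * (L.map (fun q => q ^ 2)).sum) y := by
  induction L with
  | nil => simp [pairing_zero]
  | cons q L ih =>
    rw [List.map_cons, List.sum_cons, mul_add, pairing_add]
    exact add_nonneg (h q (by simp)) (ih fun r hr => h r (by simp [hr]))

theorem mdeg_le_totalDegree {n : ℕ} (p : RPoly n) {α : Fin n →₀ ℕ} (hα : α ∈ p.support) :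
    mdeg α ≤ p.totalDegree := by
  have := le_totalDegree hα
  rwa [Finsupp.sum_fintype _ _ (by simp)] at this

theorem pairing_moments {n : ℕ} (p : RPoly n) (y : (Fin n →₀ ℕ) → ℝ) (μ : Measure (Fin n → ℝ))
    (h : ∀ α ∈ p.support, Integrable (fun x => ∏ i, x i ^ α i) μ ∧
      y α = ∫ x, (∏ i, x i ^ α i) ∂μ) : pairing p y = ∫ x, eval x p ∂μ := by
  simp only [eval_eq', pairing]
  rw [integral_finsetSum _ fun α hα => (h α hα).1.const_mul _]
  exact Finset.sum_congr rfl fun α hα => by rw [integral_const_mul, (h α hα).2]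

noncomputable def momSeq {n : ℕ} (μ : Measure (Fin n → ℝ)) : (Fin n →₀ ℕ) → ℝ := fun α => ∫ x, (∏ i, x i ^ α i) ∂μ

theorem integ_mon {n : ℕ} {K : Set (Fin n → ℝ)} (hK : IsCompact K) (μ : Measure (Fin n → ℝ))
    [IsFiniteMeasure μ] (hμ : μ Kᶜ = 0) (α : Fin n →₀ ℕ) :
    Integrable (fun x : Fin n → ℝ => ∏ i, x i ^ α i) μ := by
  have := integ_poly hK μ hμ (∏ i, X i ^ α i)
  simpa only [map_prod, map_pow, eval_X] using this

theorem pairing_momSeq {n : ℕ} {K : Set (Fin n → ℝ)} (hK : IsCompact K) (μ : Measure (Fin n → ℝ))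
    [IsFiniteMeasure μ] (hμ : μ Kᶜ = 0) (p : RPoly n) :
    pairing p (momSeq μ) = ∫ x, eval x p ∂μ :=
  pairing_moments p _ μ fun α _ => ⟨integ_mon hK μ hμ α, rfl⟩

theorem eval_lin {n m : ℕ} (f : RPoly n) (a : Fin m → RPoly n) (θ : Fin m → ℝ) (x : Fin n → ℝ) :
    eval x (f - ∑ i, C (θ i) * a i) = eval x f - ∑ i, θ i * eval x (a i) := by
  simp

theorem deg_lin {n m d : ℕ} {f : RPoly n} {a : Fin m → RPoly n} (hf : f.totalDegree ≤ d)
    (ha : ∀ i, (a i).totalDegree ≤ d) (θ : Fin m → ℝ) :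
    (f - ∑ i, C (θ i) * a i).totalDegree ≤ d := by
  refine (totalDegree_sub _ _).trans (max_le hf ?_)
  refine totalDegree_finsetSum_le fun i _ => ?_
  refine (totalDegree_mul _ _).trans ?_
  rw [totalDegree_C, zero_add]; exact ha i

/-- A certificate, with all its data bounded by `k0`. -/
theorem cert_bound {n : ℕ} (E I : Finset ℕ) (c : ℕ → RPoly n) {p : RPoly n} (hp : p ∈ bigM E I c) :
    ∃ k0 : ℕ, ∀ k, k0 ≤ k →
      (∃ p1 ∈ IdealDeg E c (2 * k), ∃ p2 ∈ QModDeg I c (2 * k), p = p1 + p2) ∧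
      ∀ w, MomRelaxPSD E c I c k w → 0 ≤ pairing p w := by
  obtain ⟨p1, h1, p2, ⟨σ0, σ, hσ0, hσ, rfl⟩, rfl⟩ := hp
  obtain ⟨q, rfl⟩ := mem_ideal_repr E c h1
  have hσ0' := hσ0
  obtain ⟨L0, hL0⟩ := hσ0'
  have hσ' := hσ
  simp only [IsSOS] at hσ'
  choose! L hL using hσ'
  let N1 := E.sup fun j => (q j).totalDegree + (c j).totalDegree
  let N3 := I.sup fun j => (σ j).totalDegree + (c j).totalDegree
  let N4 := (L0.map totalDegree).sum
  let N5 := I.sup fun j => ((L j).map totalDegree).sum + ((c j).totalDegree + 1) / 2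
  refine ⟨N1 + σ0.totalDegree + N3 + N4 + N5, fun k hk => ⟨?_, ?_⟩⟩
  · refine ⟨_, ⟨q, fun j hj => ?_, rfl⟩, _, ⟨σ0, σ, hσ0, by omega, fun j hj => ⟨hσ j hj, ?_⟩, rfl⟩, rfl⟩
    · have : _ ≤ N1 := Finset.le_sup (f := fun j => (q j).totalDegree + (c j).totalDegree) hj
      omega
    · have : _ ≤ N3 := Finset.le_sup (f := fun j => (σ j).totalDegree + (c j).totalDegree) hj
      omega
  · rintro w ⟨hw1, hw2, hw3⟩
    rw [pairing_add, pairing_add, pairing_sum, pairing_sum]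
    have t1 : ∑ j ∈ E, pairing (c j * q j) w = 0 := Finset.sum_eq_zero fun j hj => hw1 j hj _ (by
      have : _ ≤ N1 := Finset.le_sup (f := fun j => (q j).totalDegree + (c j).totalDegree) hj
      omega)
    have t2 : 0 ≤ pairing σ0 w := by
      have := pairing_list 1 L0 w fun r hr => by
        rw [one_mul]
        refine hw3 r ?_
        have : r.totalDegree ≤ N4 := List.single_le_sum (by simp) _ (List.mem_map_of_mem hr)
        omega
      rwa [one_mul, ← hL0] at this
    have t3 : 0 ≤ ∑ j ∈ I, pairing (c j * σ j) w := Finset.sum_nonneg fun j hj => by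
      rw [hL j hj]
      refine pairing_list _ _ w fun r hr => hw2 j hj r ?_
      have e1 : r.totalDegree ≤ ((L j).map totalDegree).sum :=
        List.single_le_sum (by simp) _ (List.mem_map_of_mem hr)
      have e2 : _ ≤ N5 := Finset.le_sup
        (f := fun j => ((L j).map totalDegree).sum + ((c j).totalDegree + 1) / 2) hj
      omega
    linarith

theorem idealDeg_bigM {n : ℕ} {E I : Finset ℕ} {c : ℕ → RPoly n} {k : ℕ} {p1 p2 : RPoly n}
    (h1 : p1 ∈ IdealDeg E c k) (h2 : p2 ∈ QModDeg I c k) : p1 + p2 ∈ bigM E I c := by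
  obtain ⟨q, -, rfl⟩ := h1
  obtain ⟨σ0, σ, hσ0, -, hσ, rfl⟩ := h2
  refine ⟨_, ?_, _, ⟨σ0, σ, hσ0, fun j hj => (hσ j hj).1, rfl⟩, rfl⟩
  exact Ideal.sum_mem _ fun j hj => Ideal.mul_mem_right _ _ (Ideal.subset_span ⟨j, hj, rfl⟩)

theorem main_aux
    (n m m1 d : ℕ)
    (f : RPoly n) (a : Fin m → RPoly n) (b : Fin m → ℝ)
    (E I : Finset ℕ) (c : ℕ → RPoly n)
    (hf : f.totalDegree ≤ d) (ha : ∀ i, (a i).totalDegree ≤ d)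
    (harch : ArchimedeanQM E I c)
    (θs : Fin m → ℝ) (hθfeas : PFeas m1 d f a (Kset E I c) θs)
    (hθmax : ∀ θ : Fin m → ℝ, PFeas m1 d f a (Kset E I c) θ →
      (∑ i, b i * θ i) ≤ ∑ i, b i * θs i)
    (ys : (Fin n →₀ ℕ) → ℝ) (hyfeas : MFeas m1 d a b (Kset E I c) ys)
    (hymin : ∀ y : (Fin n →₀ ℕ) → ℝ, MFeas m1 d a b (Kset E I c) y →
      pairing f ys ≤ pairing f y)
    (hslater : ∃ θ : Fin m → ℝ, (∀ i : Fin m, m1 ≤ (i : ℕ) → 0 ≤ θ i) ∧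
      (f - ∑ i, C (θ i) * a i) ∈ PdInterior d (Kset E I c))
    (hopt : ∀ u : Fin n → ℝ,
      (u ∈ Kset E I c ∧ ∀ x ∈ Kset E I c,
        eval u (f - ∑ i, C (θs i) * a i) ≤ eval x (f - ∑ i, C (θs i) * a i)) →
      OptCondsAt E c I c (f - ∑ i, C (θs i) * a i) u) :
    ∃ k0 : ℕ, ∀ k : ℕ, k0 ≤ k →
      SOSRelaxVal m1 f a b E c I c k = PVal m1 d f a b (Kset E I c) ∧
      GMomVal m1 f a b E c I c k = PVal m1 d f a b (Kset E I c) ∧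
      MVal m1 d f a b (Kset E I c) = PVal m1 d f a b (Kset E I c) := by
  classical
  obtain ⟨R, -, p1, hp1, p2, hp2, hRe⟩ := harch
  have hR : (C R : RPoly n) - ∑ i, (X i : RPoly n) ^ 2 ∈ bigM E I c := ⟨p1, hp1, p2, hp2, hRe⟩
  have hK := Kset_compact hR
  set p := f - ∑ i, C (θs i) * a i with hpdef
  have hp0 : ∀ x ∈ Kset E I c, 0 ≤ eval x p := hθfeas.2.2
  have hopt0 : ∀ z, z ∈ Kset E I c → eval z p = 0 → OptCondsAt E c I c p z := fun z hz h0 =>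
    hopt z ⟨hz, fun x hx => by rw [h0]; exact hp0 x hx⟩
  have hfin := zeros_finite E I c hK p hopt0
  have hpM : p ∈ bigM E I c := core E I c hR p hp0 hfin.toFinset
    (fun x => by simp) (fun z hz => by
      have := hfin.mem_toFinset.1 hz
      exact hopt0 z this.1 this.2)
  obtain ⟨k0, hk0⟩ := cert_bound E I c hpM
  set v := ∑ i, b i * θs i with hv
  -- the measure of ys
  obtain ⟨⟨μ, hμf, hμK, hμ⟩, hy1, hy2⟩ := id hyfeas
  have hpys : ∀ q : RPoly n, q.totalDegree ≤ d → pairing q ys = pairing q (momSeq μ) := by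
    intro q hq
    rw [pairing_momSeq hK μ hμK]
    exact pairing_moments q ys μ fun α hα => hμ α ((mdeg_le_totalDegree q hα).trans hq)
  have hlinpair : ∀ w, pairing f w = pairing p w + ∑ i, θs i * pairing (a i) w := by
    intro w
    have e : f = p + ∑ i, C (θs i) * a i := by rw [hpdef]; ring
    conv_lhs => rw [e]
    rw [pairing_add, pairing_sum]
    simp only [pairing_C_mul]
  have hweak : ∀ w, 0 ≤ pairing p w → (∀ i : Fin m, (i : ℕ) < m1 → pairing (a i) w = b i) →
      (∀ i : Fin m, m1 ≤ (i : ℕ) → b i ≤ pairing (a i) w) → v ≤ pairing f w := by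
    intro w hw h1 h2
    rw [hlinpair w]
    have : v ≤ ∑ i, θs i * pairing (a i) w := Finset.sum_le_sum fun i _ => by
      rcases lt_or_ge (i : ℕ) m1 with hi | hi
      · rw [h1 i hi, mul_comm]
      · rw [mul_comm]; exact mul_le_mul_of_nonneg_left (h2 i hi) (hθfeas.1 i hi)
    linarith
  -- strong duality
  have hle : pairing f ys ≤ v := by
    obtain ⟨θb, hθb, -, ε, hε, hint⟩ := hslater
    obtain ⟨ν, hν, hνK, e1, e2, e3⟩ := strong_dual (m1 := m1) hK f a b v (fun θ h1 h2 =>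
      hθmax θ ⟨h1, deg_lin hf ha θ, fun x hx => by rw [eval_lin]; exact h2 x hx⟩) θb hθb ε hε
      (fun x hx => by
        have := hint (f - ∑ i, C (θb i) * a i - C ε)
          ((totalDegree_sub _ _).trans (max_le (deg_lin hf ha θb) (by rw [totalDegree_C]; exact Nat.zero_le _)))
          (fun α => by
            generalize f - ∑ i, C (θb i) * a i = g
            rw [coeff_sub, coeff_C]
            split_ifs
            · simp [abs_of_pos hε]
            · simp [hε.le]) x hx
        rw [map_sub, eval_lin, eval_C] at this
        linarith)
    refine (hymin (momSeq ν) ⟨⟨ν, hν, hνK, fun α _ => ⟨integ_mon hK ν hνK α, rfl⟩⟩, fun i hi => ?_,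
      fun i hi => ?_⟩).trans ?_
    · rw [pairing_momSeq hK ν hνK]; exact e1 i hi
    · rw [pairing_momSeq hK ν hνK]; exact e2 i hi
    · rw [pairing_momSeq hK ν hνK]; exact e3
  have hae : ∀ᵐ x ∂μ, x ∈ Kset E I c := by rw [ae_iff]; exact hμK
  have hMge : ∀ y, MFeas m1 d a b (Kset E I c) y → v ≤ pairing f y := by
    rintro y ⟨⟨ν, hν, hνK, hνy⟩, h1, h2⟩
    refine hweak y ?_ h1 h2
    rw [pairing_moments p y ν fun α hα => hνy α ((mdeg_le_totalDegree p hα).trans (deg_lin hf ha θs))]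
    refine integral_nonneg_of_ae ?_
    have : ∀ᵐ x ∂ν, x ∈ Kset E I c := by rw [ae_iff]; exact hνK
    filter_upwards [this] with x hx using hp0 x hx
  have heq : pairing f ys = v := le_antisymm hle (hMge ys hyfeas)
  have hPV : PVal m1 d f a b (Kset E I c) = v := by
    refine IsGreatest.csSup_eq ⟨⟨θs, hθfeas, rfl⟩, ?_⟩
    rintro _ ⟨θ, hθ, rfl⟩
    exact hθmax θ hθ
  refine ⟨k0, fun k hk => ?_⟩
  obtain ⟨hc1, hc2⟩ := hk0 k hk
  rw [hPV]
  refine ⟨?_, ?_, ?_⟩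
  · refine IsGreatest.csSup_eq ⟨⟨θs, hθfeas.1, hc1, rfl⟩, ?_⟩
    rintro _ ⟨θ, hθ, ⟨q1, hq1, q2, hq2, hq⟩, rfl⟩
    refine hθmax θ ⟨hθ, deg_lin hf ha θ, fun x hx => ?_⟩
    rw [hq]
    exact bigM_eval_nonneg (idealDeg_bigM hq1 hq2) hx
  · refine IsLeast.csInf_eq ⟨⟨momSeq μ, ⟨fun i hi => ?_, fun i hi => ?_, fun j hj q _ => ?_,
      fun j hj q _ => ?_, fun q _ => ?_⟩, ?_⟩, ?_⟩
    · rw [← hpys _ (ha i)]; exact hy1 i hi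
    · rw [← hpys _ (ha i)]; exact hy2 i hi
    · rw [pairing_momSeq hK μ hμK]
      refine integral_eq_zero_of_ae ?_
      filter_upwards [hae] with x hx
      rw [map_mul, hx.1 j hj, zero_mul]; rfl
    · rw [pairing_momSeq hK μ hμK]
      refine integral_nonneg_of_ae ?_
      filter_upwards [hae] with x hx
      rw [map_mul, map_pow]
      exact mul_nonneg (hx.2 j hj) (sq_nonneg _)
    · rw [pairing_momSeq hK μ hμK]
      refine integral_nonneg fun x => ?_
      rw [map_pow]
      exact sq_nonneg _
    · rw [← hpys f hf, heq]
    · rintro _ ⟨w, ⟨h1, h2, h3⟩, rfl⟩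
      exact hweak w (hc2 w h3) h1 h2
  · refine IsLeast.csInf_eq ⟨⟨ys, hyfeas, heq.symm⟩, ?_⟩
    rintro _ ⟨y, hy, rfl⟩
    exact hMge y hy

/-- Theorem 3.2(i): under archimedeanness, Assumption A, and the
optimality conditions at every global minimizer of (Q), the Moment-SOS hierarchy for
the pair (P)-(M) has finite convergence. -/
theorem statement_0
    (n m m1 d : ℕ) (hm1 : m1 ≤ m)
    (f : RPoly n) (a : Fin m → RPoly n) (b : Fin m → ℝ)
    (E I : Finset ℕ) (hEI : Disjoint E I) (c : ℕ → RPoly n)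
    (hf : f.totalDegree ≤ d) (ha : ∀ i, (a i).totalDegree ≤ d)
    -- archimedeanness of Ideal(c_eq) + QM(c_in)
    (harch : ArchimedeanQM E I c)
    -- Assumption A: θ* is a maximizer of (P)
    (θs : Fin m → ℝ) (hθfeas : PFeas m1 d f a (Kset E I c) θs)
    (hθmax : ∀ θ : Fin m → ℝ, PFeas m1 d f a (Kset E I c) θ →
      (∑ i, b i * θ i) ≤ ∑ i, b i * θs i)
    -- Assumption A: (M) has a minimizer y* ≠ 0
    (ys : (Fin n →₀ ℕ) → ℝ) (hyfeas : MFeas m1 d a b (Kset E I c) ys)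
    (hymin : ∀ y : (Fin n →₀ ℕ) → ℝ, MFeas m1 d a b (Kset E I c) y →
      pairing f ys ≤ pairing f y)
    (hynz : ∃ α : Fin n →₀ ℕ, mdeg α ≤ d ∧ ys α ≠ 0)
    -- Assumption A: Slater condition for (P)
    (hslater : ∃ θ : Fin m → ℝ, (∀ i : Fin m, m1 ≤ (i : ℕ) → 0 ≤ θ i) ∧
      (f - ∑ i, C (θ i) * a i) ∈ PdInterior d (Kset E I c))
    -- LICQC, SCC, SOSC at every global minimizer of (Q)
    (hopt : ∀ u : Fin n → ℝ,
      (u ∈ Kset E I c ∧ ∀ x ∈ Kset E I c,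
        eval u (f - ∑ i, C (θs i) * a i) ≤ eval x (f - ∑ i, C (θs i) * a i)) →
      OptCondsAt E c I c (f - ∑ i, C (θs i) * a i) u) :
    ∃ k0 : ℕ, ∀ k : ℕ, k0 ≤ k →
      SOSRelaxVal m1 f a b E c I c k = PVal m1 d f a b (Kset E I c) ∧
      GMomVal m1 f a b E c I c k = PVal m1 d f a b (Kset E I c) ∧
      MVal m1 d f a b (Kset E I c) = PVal m1 d f a b (Kset E I c) := by
  exact main_aux n m m1 d f a b E I c hf ha harch θs hθfeas hθmax ys hyfeas hymin hslater hopt
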